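/- arXiv:2605.19596 — 2 statements merged into one kernel-verified Lean document; each statement's English description precedes it below -/
import Mathlib

section
/- Let q = p^m ≡ 9 (mod 16) be a prime power (i.e., q = 8f+1 with f odd) in which 2 is a quartic residue (2 ∈ C_0^4). Let x and a be the integers with q = x² + 4y² (y ∈ ℤ), x ≡ 1 (mod 4), and q = a² + 2b² (b ∈ ℤ), a ≡ 1 (mod 4), given by the unique such representations of q, and suppose a = 1. Then D = {C_0^8, C_1^8, C_4^8, C_6^8} is a (q,4,(q−1)/8;(q−12−x)/16,(q−6+x)/16)-DPDF relative to C_0^2. -/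
open Finset

section Defs

variable {G : Type*} [AddCommGroup G] [Fintype G] [DecidableEq G]

/-- The multiset `Δ(D)` of internal differences `x - y` (for `x ≠ y` in `D`). -/
def intDiff (D : Finset G) : Multiset G :=
  ((D ×ˢ D).filter (fun p => p.1 ≠ p.2)).val.map (fun p => p.1 - p.2)

/-- The multiset `Δ(D, E)` of external differences `x - y` for `x ∈ D`, `y ∈ E`. -/
def extDiff (D E : Finset G) : Multiset G :=
  (D ×ˢ E).val.map (fun p => p.1 - p.2)

/-- The finset `G^*` of nonzero elements of `G`. -/
def Gstar (G : Type*) [AddCommGroup G] [Fintype G] [DecidableEq G] : Finset G :=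
  Finset.univ.erase 0

/-- `A` is a `(v, k, lam, mu)` partial difference set in `G`:
`Δ(A) = lam • A^* + mu • (G^* \ A)`. -/
def IsPDS (A : Finset G) (v k lam mu : ℕ) : Prop :=
  Fintype.card G = v ∧ A.card = k ∧
    intDiff A = lam • (A.erase 0).val + mu • (Gstar G \ A).val

/-- `D` is a `(v, k, lam, mu)` skew partial difference set corresponding to the
`(v, k, lam, mu)`-PDS `A`: `Δ(D) = lam • A^* + mu • (G^* \ A)`. -/
def IsSkewPDS (D A : Finset G) (v k lam mu : ℕ) : Prop :=
  IsPDS A v k lam mu ∧ D.card = k ∧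
    intDiff D = lam • (A.erase 0).val + mu • (Gstar G \ A).val

/-- `D` is an `(n, m, k₁, …, k_m; lam, mu)` disjoint partial difference family relative
to `T`: the `D i` are pairwise disjoint subsets of `G^*` of sizes `k i`, and
`∑ i, Δ(D i) = lam • T + mu • (G^* \ T)`. -/
def IsDPDF {ι : Type*} [Fintype ι] (D : ι → Finset G) (n m : ℕ) (k : ι → ℕ)
    (T : Finset G) (lam mu : ℕ) : Prop :=
  Fintype.card G = n ∧ Fintype.card ι = m ∧
    (∀ i, (0 : G) ∉ D i) ∧ (∀ i, (D i).card = k i) ∧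
    (Pairwise (fun i j => Disjoint (D i) (D j))) ∧
    ∑ i, intDiff (D i) = lam • T.val + mu • (Gstar G \ T).val

/-- `D` is an `(n, m, k₁, …, k_m; lam, mu)` external partial difference family relative
to `T`: the `D i` are pairwise disjoint subsets of `G^*` of sizes `k i`, and
`∑_{i ≠ j}, Δ(D i, D j) = lam • T + mu • (G^* \ T)`. -/
def IsEPDF {ι : Type*} [Fintype ι] [DecidableEq ι] (D : ι → Finset G) (n m : ℕ)
    (k : ι → ℕ) (T : Finset G) (lam mu : ℕ) : Prop :=
  Fintype.card G = n ∧ Fintype.card ι = m ∧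
    (∀ i, (0 : G) ∉ D i) ∧ (∀ i, (D i).card = k i) ∧
    (Pairwise (fun i j => Disjoint (D i) (D j))) ∧
    ∑ i, ∑ j ∈ Finset.univ.erase i, extDiff (D i) (D j)
      = lam • T.val + mu • (Gstar G \ T).val

/-- `D` is an `(n, m, k₁, …, k_m, lam)` disjoint difference family:
`∑ i, Δ(D i) = lam • G^*`. -/
def IsDDF {ι : Type*} [Fintype ι] (D : ι → Finset G) (n m : ℕ) (k : ι → ℕ)
    (lam : ℕ) : Prop :=
  Fintype.card G = n ∧ Fintype.card ι = m ∧
    (∀ i, (0 : G) ∉ D i) ∧ (∀ i, (D i).card = k i) ∧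
    (Pairwise (fun i j => Disjoint (D i) (D j))) ∧
    ∑ i, intDiff (D i) = lam • (Gstar G).val

/-- `D` is an `(n, m, k₁, …, k_m, lam)` external difference family:
`∑_{i ≠ j}, Δ(D i, D j) = lam • G^*`. -/
def IsEDF {ι : Type*} [Fintype ι] [DecidableEq ι] (D : ι → Finset G) (n m : ℕ)
    (k : ι → ℕ) (lam : ℕ) : Prop :=
  Fintype.card G = n ∧ Fintype.card ι = m ∧
    (∀ i, (0 : G) ∉ D i) ∧ (∀ i, (D i).card = k i) ∧
    (Pairwise (fun i j => Disjoint (D i) (D j))) ∧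
    ∑ i, ∑ j ∈ Finset.univ.erase i, extDiff (D i) (D j) = lam • (Gstar G).val

end Defs

section Cyclotomy

variable {F : Type*} [Field F] [Fintype F] [DecidableEq F]

/-- The cyclotomic class `C_i^e = α^i ⟨α^e⟩` of order `e` in the finite field `F`,
with respect to the primitive element `α`.  (Since `α` has multiplicative order at most
`|F| - 1`, letting `j` range over `0, …, |F| - 1` captures the whole class.) -/
def cycClass (α : F) (e i : ℕ) : Finset F :=
  (Finset.range (Fintype.card F)).image (fun j => α ^ (e * j + i))

/-- `α` is a primitive element of the finite field `F`: every nonzero element of `F`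
is a power of `α`. -/
def IsPrimitiveElt (α : F) : Prop :=
  ∀ x : F, x ≠ 0 → ∃ n : ℕ, α ^ n = x

end Cyclotomy

/-- Uniqueness of primitive representations of a prime power by `x² + n y²`. -/
lemma rep_unique (p m : ℕ) (hp : p.Prime) (n x y z w : ℤ) (hn : 2 ≤ n)
    (hpn : ¬ (p : ℤ) ∣ n) (hp2 : ¬ (p : ℤ) ∣ 2)
    (h1 : (p : ℤ) ^ m = x ^ 2 + n * y ^ 2) (h2 : (p : ℤ) ^ m = z ^ 2 + n * w ^ 2)
    (hm : m ≠ 0) (hx : ¬ (p : ℤ) ∣ x) (hz : ¬ (p : ℤ) ∣ z) : x ^ 2 = z ^ 2 := by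
  have hpi : Prime (p : ℤ) := Nat.prime_iff_prime_int.mp hp
  set P : ℤ := (p : ℤ) ^ m with hP
  have hPpos : 0 < P := by
    have : (0 : ℤ) < p := by exact_mod_cast hp.pos
    positivity
  have hpP : (p : ℤ) ∣ P := dvd_pow_self _ hm
  have hD : P ∣ (x * w - y * z) * (x * w + y * z) := by
    have hc : IsCoprime P n := by
      rw [hP]
      exact IsCoprime.pow_left ((Prime.coprime_iff_not_dvd hpi).2 hpn)
    apply hc.dvd_of_dvd_mul_left
    refine ⟨x ^ 2 - z ^ 2, ?_⟩
    linear_combination x ^ 2 * h2 * (-1) + z ^ 2 * h1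
  have fin0 : ∀ D E : ℤ, P ^ 2 = E ^ 2 + n * D ^ 2 → P ∣ D → D = 0 := by
    intro D E h hd
    by_contra hne
    obtain ⟨c, rfl⟩ := hd
    have hc : c ≠ 0 := by rintro rfl; simp at hne
    have : 1 ≤ c ^ 2 := by have := sq_pos_of_ne_zero hc; omega
    nlinarith [sq_nonneg E, sq_nonneg P, mul_le_mul hn this (by norm_num) (by omega), sq_pos_of_ne_zero hPpos.ne']
  have fin1 : (x * w) ^ 2 = (y * z) ^ 2 → x ^ 2 = z ^ 2 := by
    intro h
    have : P * (x ^ 2 - z ^ 2) = 0 := by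
      linear_combination n * h + x ^ 2 * h2 - z ^ 2 * h1
    rcases mul_eq_zero.1 this with h | h
    · omega
    · linarith
  have hor : ¬ ((p : ℤ) ∣ (x * w - y * z) ∧ (p : ℤ) ∣ (x * w + y * z)) := by
    rintro ⟨ha, hb⟩
    have : (p : ℤ) ∣ 2 * x * w := by
      have h4 : 2 * x * w = (x * w - y * z) + (x * w + y * z) := by ring
      rw [h4]
      exact dvd_add ha hb
    have hw : (p : ℤ) ∣ w := by
      rcases hpi.dvd_or_dvd this with h | h
      · rcases hpi.dvd_or_dvd h with h | h
        · exact absurd h hp2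
        · exact absurd h hx
      · exact h
    apply hz
    apply hpi.dvd_of_dvd_pow (n := 2)
    have : z ^ 2 = P - n * w * w := by linear_combination -h2
    rw [this]
    exact dvd_sub hpP (Dvd.dvd.mul_left hw _)
  by_cases hpD : (p : ℤ) ∣ (x * w - y * z)
  · have hpE : ¬ (p : ℤ) ∣ (x * w + y * z) := fun h => hor ⟨hpD, h⟩
    have hc : IsCoprime P (x * w + y * z) :=
      IsCoprime.pow_left ((Prime.coprime_iff_not_dvd hpi).2 hpE)
    have hd := hc.dvd_of_dvd_mul_right hD
    have h0 := fin0 (x * w - y * z) (x * z + n * y * w)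
      (by linear_combination P * h1 + (x ^ 2 + n * y ^ 2) * h2) hd
    apply fin1
    linear_combination (x * w + y * z) * h0
  · have hc : IsCoprime P (x * w - y * z) :=
      IsCoprime.pow_left ((Prime.coprime_iff_not_dvd hpi).2 hpD)
    have hd := hc.dvd_of_dvd_mul_left hD
    have h0 := fin0 (x * w + y * z) (x * z - n * y * w)
      (by linear_combination P * h1 + (x ^ 2 + n * y ^ 2) * h2) hd
    apply fin1
    linear_combination (x * w - y * z) * h0

lemma rep_unique_prime (p : ℕ) (hp : p.Prime) (n x y z w : ℤ) (hn : 2 ≤ n)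
    (hpn : ¬ (p : ℤ) ∣ n) (hp2 : ¬ (p : ℤ) ∣ 2)
    (h1 : (p : ℤ) = x ^ 2 + n * y ^ 2) (h2 : (p : ℤ) = z ^ 2 + n * w ^ 2) : x ^ 2 = z ^ 2 := by
  have hpi : Prime (p : ℤ) := Nat.prime_iff_prime_int.mp hp
  have key : ∀ x y : ℤ, (p : ℤ) = x ^ 2 + n * y ^ 2 → ¬ (p : ℤ) ∣ x := by
    intro x y h hx
    have : (p : ℤ) ∣ n * y ^ 2 := by
      have h3 : n * y ^ 2 = p - x * x := by linear_combination -h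
      rw [h3]
      exact dvd_sub dvd_rfl (Dvd.dvd.mul_left hx _)
    have hy : (p : ℤ) ∣ y := by
      rcases hpi.dvd_or_dvd this with h | h
      · exact absurd h hpn
      · exact hpi.dvd_of_dvd_pow h
    obtain ⟨c, rfl⟩ := hx
    obtain ⟨d, rfl⟩ := hy
    have h5 : (p : ℤ) * 1 = p * (p * (c ^ 2 + n * d ^ 2)) := by linear_combination h
    have h6 := mul_left_cancel₀ hpi.ne_zero h5
    exact hpi.not_isUnit (isUnit_of_dvd_one ⟨_, h6⟩)
  exact rep_unique p 1 hp n x y z w hn hpn hp2 (by simpa using h1) (by simpa using h2) one_ne_zero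
    (key x y h1) (key z w h2)

/-- `2`-adic valuation of `p^n - 1`. -/
lemma pow_sub_one_val (p : ℤ) (hp : p % 4 = 1) (k : ℕ) (hk : k % 2 = 1) (s : ℕ) :
    ∃ o : ℤ, o % 2 = 1 ∧ p ^ (2 ^ s * k) - 1 = (p - 1) * 2 ^ s * o := by
  induction s with
  | zero =>
    refine ⟨∑ i ∈ Finset.range k, p ^ i, ?_, ?_⟩
    · have hs : ∀ j : ℕ, (∑ i ∈ Finset.range j, p ^ i) % 2 = (j : ℤ) % 2 := by
        intro j
        induction j with
        | zero => simp
        | succ j ih =>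
          have h1 : p ^ j % 2 = 1 := Int.odd_iff.1 (Odd.pow (Int.odd_iff.2 (by omega)))
          rw [Finset.sum_range_succ]
          push_cast
          omega
      rw [hs]
      omega
    · have := mul_geom_sum p k
      simp [this]
  | succ s ih =>
    obtain ⟨o, ho, h⟩ := ih
    have h1 : p ^ (2 ^ s * k) % 4 = 1 := by
      have : p ^ (2 ^ s * k) ≡ 1 ^ (2 ^ s * k) [ZMOD 4] := Int.ModEq.pow _ hp
      simpa [Int.ModEq] using this
    obtain ⟨c, hc⟩ : ∃ c, p ^ (2 ^ s * k) = 4 * c + 1 := ⟨p ^ (2 ^ s * k) / 4, by omega⟩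
    refine ⟨o * (2 * c + 1), ?_, ?_⟩
    · rw [Int.mul_emod, ho]; omega
    · have : p ^ (2 ^ (s + 1) * k) = (p ^ (2 ^ s * k)) ^ 2 := by rw [← pow_mul]; ring_nf
      rw [this, pow_succ]
      linear_combination (p ^ (2 ^ s * k) + 1) * h + ((p - 1) * 2 ^ s * o) * hc

lemma zpow_im_dvd (v : ℤ) (z : ℤ√(-2)) (hz : v ∣ z.im) (k : ℕ) : v ∣ (z ^ k).im := by
  induction k with
  | zero => simp
  | succ k ih =>
    rw [pow_succ, Zsqrtd.im_mul]
    exact dvd_add (Dvd.dvd.mul_left hz _) (Dvd.dvd.mul_right ih _)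

lemma zpow_im_dvd2 (v : ℤ) (z : ℤ√(-2)) (hz : v ∣ z.im) (k s : ℕ) :
    2 ^ s * v ∣ (z ^ (2 ^ s * k)).im := by
  induction s with
  | zero => simpa using zpow_im_dvd v z hz k
  | succ s ih =>
    obtain ⟨c, hc⟩ := ih
    have : z ^ (2 ^ (s + 1) * k) = z ^ (2 ^ s * k) * z ^ (2 ^ s * k) := by rw [← pow_add]; ring_nf
    rw [this, Zsqrtd.im_mul, hc]
    exact ⟨(z ^ (2 ^ s * k)).re * c, by ring⟩

lemma no_odd_power (p : ℤ) (v : ℤ) (h4 : p % 16 = 9) (hpv : p = 1 + 2 * v ^ 2) (n : ℕ) (hn : n ≠ 0)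
    (hA : ((⟨1, v⟩ : ℤ√(-2)) ^ (2 * n + 1)).re ^ 2 = 1) : False := by
  set z : ℤ√(-2) := ⟨1, v⟩ with hz
  have hvim : v ∣ z.im := by simp [hz]
  have hv0 : v ≠ 0 := by rintro rfl; simp at hpv; subst hpv; omega
  have h8 : ∀ k : ℕ, (z ^ k).re % 8 = 1 := by
    intro k
    induction k with
    | zero => simp
    | succ k ih =>
      rw [pow_succ, Zsqrtd.re_mul]
      obtain ⟨c, hc⟩ := zpow_im_dvd v z hvim k
      have e : (z ^ k).re * z.re + -2 * (z ^ k).im * z.im = (z ^ k).re - (p - 1) * c := by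
        rw [hc, hpv]; simp [hz]; ring
      rw [e]
      obtain ⟨d, hd⟩ : ∃ d, p - 1 = 8 * d := ⟨(p - 1) / 8, by omega⟩
      rw [hd, mul_assoc]; omega
  have h1 : (z ^ (2 * n + 1)).re = 1 := by
    have := h8 (2 * n + 1)
    rcases (sq_eq_sq_iff_eq_or_eq_neg.1 (hA.trans (one_pow 2).symm)) with h | h <;> omega
  have e1 : (z ^ (2 * n + 1)).re = (z ^ n).re * (z ^ (n + 1)).re - 2 * (z ^ n).im * (z ^ (n + 1)).im := by
    have : z ^ (2 * n + 1) = z ^ n * z ^ (n + 1) := by rw [← pow_add]; ring_nf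
    rw [this, Zsqrtd.re_mul]; ring
  have e2 : (z ^ n).re ^ 2 + 2 * (z ^ n).im ^ 2 = p ^ n := by
    have h : Zsqrtd.norm (z ^ n) = (Zsqrtd.norm z) ^ n := map_pow (Zsqrtd.normMonoidHom) z n
    have h' : Zsqrtd.norm z = p := by rw [Zsqrtd.norm_def, hpv]; simp [hz]; ring
    rw [h', Zsqrtd.norm_def] at h
    linarith
  have e3 : (z ^ (n + 1)).re = (z ^ n).re - 2 * (z ^ n).im * v := by
    rw [pow_succ, Zsqrtd.re_mul]; simp [hz]; ring
  have e4 : (z ^ (n + 1)).im = (z ^ n).re * v + (z ^ n).im := by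
    rw [pow_succ, Zsqrtd.im_mul]; simp [hz]
  have e5 : p ^ n - 1 = 4 * (z ^ n).im * (z ^ (n + 1)).im := by
    rw [← e2, ← h1, e1, e3, e4]; ring
  obtain ⟨s, k, hk, rfl⟩ := Nat.exists_eq_two_pow_mul_odd hn
  obtain ⟨o, ho, h⟩ := pow_sub_one_val p (by omega) k (Nat.odd_iff.1 hk) s
  obtain ⟨c, hc⟩ := zpow_im_dvd2 v z hvim k s
  obtain ⟨d, hd⟩ := zpow_im_dvd v z hvim (2 ^ s * k + 1)
  rw [hc, hd, h, hpv] at e5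
  have : (2 * v ^ 2 * 2 ^ s) * o = (2 * v ^ 2 * 2 ^ s) * (2 * (c * d)) := by linear_combination e5
  have := mul_left_cancel₀ (by positivity) this
  omega

lemma odd_power_case (p n : ℕ) (hp : p.Prime) (h16 : p % 16 = 9) (u v b : ℤ)
    (huv : (p : ℤ) = u ^ 2 + 2 * v ^ 2) (hb : (p : ℤ) ^ (2 * n + 1) = 1 + 2 * b ^ 2) : n = 0 := by
  by_contra hn
  have hpi : Prime (p : ℤ) := Nat.prime_iff_prime_int.mp hp
  have h2 : ¬ (p : ℤ) ∣ 2 := by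
    intro h
    have := Int.le_of_dvd (by norm_num) h
    omega
  have h1' : ¬ (p : ℤ) ∣ 1 := fun h => hpi.not_isUnit (isUnit_of_dvd_one h)
  have hpu : ¬ (p : ℤ) ∣ u := by
    intro hu
    have : (p : ℤ) ∣ 2 * v ^ 2 := by
      have h3 : 2 * v ^ 2 = p - u * u := by linear_combination -huv
      rw [h3]
      exact dvd_sub dvd_rfl (Dvd.dvd.mul_left hu _)
    have hy : (p : ℤ) ∣ v := by
      rcases hpi.dvd_or_dvd this with h | h
      · exact absurd h h2
      · exact hpi.dvd_of_dvd_pow h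
    obtain ⟨c, rfl⟩ := hu
    obtain ⟨d, rfl⟩ := hy
    have h5 : (p : ℤ) * 1 = p * (p * (c ^ 2 + 2 * d ^ 2)) := by linear_combination huv
    have h6 := mul_left_cancel₀ hpi.ne_zero h5
    exact h1' ⟨_, h6⟩
  have key : ∀ u : ℤ, ¬ (p : ℤ) ∣ u → (p : ℤ) = u ^ 2 + 2 * v ^ 2 →
      ((⟨u, v⟩ : ℤ√(-2)) ^ (2 * n + 1)).re ^ 2 = 1 := by
    intro u hpu huv
    set z : ℤ√(-2) := ⟨u, v⟩ with hz
    have hnd : ∀ k : ℕ, ¬ (p : ℤ) ∣ (z ^ (k + 1)).re ∧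
        (p : ℤ) ∣ (z ^ (k + 1)).im * v * 2 + (z ^ (k + 1)).re * u := by
      intro k
      induction k with
      | zero =>
        refine ⟨by simpa [hz] using hpu, ?_⟩
        exact ⟨1, by simp [hz, huv]; ring⟩
      | succ k ih =>
        obtain ⟨ih1, c, ih2⟩ := ih
        have er : (z ^ (k + 1 + 1)).re = 2 * (z ^ (k + 1)).re * u - p * c := by
          rw [pow_succ z (k + 1), Zsqrtd.re_mul]; simp only [hz] at *
          linear_combination -ih2
        have ei : (z ^ (k + 1 + 1)).im = (z ^ (k + 1)).re * v + (z ^ (k + 1)).im * u := by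
          rw [pow_succ z (k + 1), Zsqrtd.im_mul]
        constructor
        · rw [er]
          intro hd
          have : (p : ℤ) ∣ 2 * (z ^ (k + 1)).re * u := (dvd_sub_left (Dvd.intro _ rfl)).1 hd
          rcases hpi.dvd_or_dvd this with h | h
          · rcases hpi.dvd_or_dvd h with h | h
            · exact h2 h
            · exact ih1 h
          · exact hpu h
        · rw [er, ei]
          refine ⟨(z ^ (k + 1)).re, ?_⟩
          have := ih2
          linear_combination (-(z ^ (k + 1)).re) * huv + u * ih2 
    have e2 : (z ^ (2 * n + 1)).re ^ 2 + 2 * (z ^ (2 * n + 1)).im ^ 2 = (p : ℤ) ^ (2 * n + 1) := by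
      have h : Zsqrtd.norm (z ^ (2 * n + 1)) = (Zsqrtd.norm z) ^ (2 * n + 1) :=
        map_pow (Zsqrtd.normMonoidHom) z _
      have h' : Zsqrtd.norm z = p := by rw [Zsqrtd.norm_def, huv]; simp [hz]; ring
      rw [h', Zsqrtd.norm_def] at h
      linarith
    have := rep_unique p (2 * n + 1) hp 2 _ _ 1 b le_rfl h2 h2 e2.symm (by simpa using hb) (by omega)
      (hnd (2 * n)).1 h1'
    simpa using this
  have h1 := key u hpu huv
  have hdu : ∀ k : ℕ, u ∣ ((⟨u, v⟩ : ℤ√(-2)) ^ (2 * k + 1)).re ∧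
      u ∣ ((⟨u, v⟩ : ℤ√(-2)) ^ (2 * k)).im := by
    intro k
    induction k with
    | zero => simp
    | succ k ih =>
      have hi : u ∣ ((⟨u, v⟩ : ℤ√(-2)) ^ (2 * (k + 1))).im := by
        rw [show 2 * (k + 1) = (2 * k + 1) + 1 by ring, pow_succ _ (2 * k + 1), Zsqrtd.im_mul]
        exact dvd_add (Dvd.dvd.mul_right ih.1 _) (Dvd.intro_left _ rfl)
      refine ⟨?_, hi⟩
      rw [pow_succ _ (2 * (k + 1)), Zsqrtd.re_mul]
      exact dvd_add (Dvd.intro_left _ rfl) (Dvd.dvd.mul_right (Dvd.dvd.mul_left hi _) _)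
  have hu1 : u ^ 2 = 1 := by
    have : IsUnit u := isUnit_of_dvd_unit (hdu n).1
      (by apply IsUnit.of_pow_eq_one h1; norm_num)
    rcases Int.isUnit_iff.1 this with h | h <;> simp [h]
  have huv' : (p : ℤ) = 1 ^ 2 + 2 * v ^ 2 := by rw [huv, hu1]; ring
  exact no_odd_power p v (by omega) (by simpa using huv') n hn (key 1 h1' huv')

lemma even_power_case (p k : ℕ) (hp : p.Prime) (b : ℕ) (h16 : (p ^ k) ^ 2 % 16 = 9)
    (hb : (p ^ k) ^ 2 = 1 + 2 * b ^ 2) : p ^ k = 3 := by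
  set P := p ^ k with hP
  have hcase : P % 8 = 3 ∨ P % 8 = 5 := by
    have : P % 16 < 16 := Nat.mod_lt _ (by norm_num)
    rw [Nat.pow_mod] at h16
    generalize hr : P % 16 = r at *
    have : P % 8 = r % 8 := by omega
    rw [this]
    interval_cases r <;> simp_all
  have hbe : b % 2 = 0 := by
    have h1 : (1 + 2 * b ^ 2) % 16 = 9 := by rw [← hb]; exact h16
    by_contra h
    obtain ⟨c, hc⟩ : ∃ c, b = 2 * c + 1 := ⟨b / 2, by omega⟩
    have : b ^ 2 = 4 * (c * c + c) + 1 := by rw [hc]; ring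
    omega
  obtain ⟨c, rfl⟩ : ∃ c, b = 2 * c := ⟨b / 2, by omega⟩
  rcases hcase with h | h
  · obtain ⟨t, ht⟩ : ∃ t, P = 8 * t + 3 := ⟨P / 8, by omega⟩
    have e : (4 * t + 1) * (2 * t + 1) = c ^ 2 := by rw [ht] at hb; nlinarith
    have hco : Nat.Coprime (4 * t + 1) (2 * t + 1) := by
      have hi : IsCoprime ((4 * t + 1 : ℕ) : ℤ) ((2 * t + 1 : ℕ) : ℤ) :=
        ⟨-1, 2, by push_cast; ring⟩
      exact Nat.isCoprime_iff_coprime.1 hi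
    obtain ⟨s, hs⟩ := exists_eq_pow_of_mul_eq_pow (Nat.isUnit_iff.2 hco.symm) ((mul_comm _ _).trans e)
    have hs0 : s ≠ 0 := by rintro rfl; simp at hs
    obtain ⟨r, rfl⟩ : ∃ r, s = r + 1 := ⟨s - 1, by omega⟩
    have hfac : (2 * r + 1) * (2 * r + 3) = p ^ k := by rw [← hP, ht]; nlinarith
    obtain ⟨i, _, hi⟩ := (Nat.dvd_prime_pow hp).1 (Dvd.intro _ hfac)
    obtain ⟨j, _, hj⟩ := (Nat.dvd_prime_pow hp).1 (Dvd.intro_left _ hfac)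
    rcases Nat.eq_zero_or_pos i with h0 | h0
    · subst h0
      have : r = 0 := by simp at hi; omega
      subst this
      simpa using hfac.symm
    · exfalso
      have d1 : p ∣ 2 * r + 1 := hi ▸ dvd_pow_self _ (by omega)
      have hj0 : j ≠ 0 := by rintro rfl; simp at hj
      have d2 : p ∣ 2 * r + 3 := hj ▸ dvd_pow_self _ hj0
      have d3 : p ∣ 2 := by
        have := Nat.dvd_sub d2 d1
        rwa [show 2 * r + 3 - (2 * r + 1) = 2 by omega] at this
      have : p = 2 := (Nat.prime_dvd_prime_iff_eq hp Nat.prime_two).1 d3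
      rw [this] at d1
      omega
  · exfalso
    obtain ⟨t, ht⟩ : ∃ t, P = 8 * t + 5 := ⟨P / 8, by omega⟩
    have e : (4 * t + 3) * (2 * t + 1) = c ^ 2 := by rw [ht] at hb; nlinarith
    have hco : Nat.Coprime (4 * t + 3) (2 * t + 1) := by
      have hi : IsCoprime ((4 * t + 3 : ℕ) : ℤ) ((2 * t + 1 : ℕ) : ℤ) :=
        ⟨1, -2, by push_cast; ring⟩
      exact Nat.isCoprime_iff_coprime.1 hi
    obtain ⟨s, hs⟩ := exists_eq_pow_of_mul_eq_pow (Nat.isUnit_iff.2 hco) e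
    have : s ^ 2 % 4 = 3 := by omega
    rw [Nat.pow_mod] at this
    have h4 : s % 4 < 4 := Nat.mod_lt _ (by norm_num)
    interval_cases s % 4 <;> simp at this
/-- The data of an octic character normalised at the primitive element `α`. -/
structure Oct {F : Type*} [Field F] [Fintype F] [DecidableEq F]
    (χ : MulChar F ℂ) (ζ : ℂ) (α : F) (f : ℕ) : Prop where
  hζ : ζ ^ 4 = -1
  hα : IsPrimitiveElt α
  hχ : χ α = ζ
  hcard : Fintype.card F = 8 * f + 1
  hf : f % 2 = 1

namespace Oct

section

variable {F : Type*} [Field F] [Fintype F] [DecidableEq F]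
    {χ : MulChar F ℂ} {ζ : ℂ} {α : F} {f : ℕ}

lemma prim (h : Oct χ ζ α f) : IsPrimitiveRoot ζ 8 := by
  have : orderOf ζ = 2 ^ (2 + 1) := by
    apply orderOf_eq_prime_pow
    · norm_num [h.hζ]
    · norm_num
      linear_combination (ζ ^ 4 - 1) * h.hζ
  rw [IsPrimitiveRoot.iff_orderOf, this]; norm_num

lemma z8 (h : Oct χ ζ α f) : ζ ^ 8 = 1 := h.prim.pow_eq_one

lemma z0 (h : Oct χ ζ α f) : ζ ≠ 0 := by
  rintro rfl; have := h.hζ; norm_num at this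

lemma chipow (h : Oct χ ζ α f) (n : ℕ) : χ (α ^ n) = ζ ^ n := by rw [map_pow, h.hχ]

lemma ex (h : Oct χ ζ α f) {t : F} (ht : t ≠ 0) : ∃ n, t = α ^ n := by
  obtain ⟨n, hn⟩ := h.hα t ht; exact ⟨n, hn.symm⟩

lemma pow8 (h : Oct χ ζ α f) {t : F} (ht : t ≠ 0) : χ t ^ 8 = 1 := by
  obtain ⟨n, rfl⟩ := h.ex ht
  rw [h.chipow, ← pow_mul, mul_comm, pow_mul, h.z8, one_pow]

lemma ne0 (_h : Oct χ ζ α f) {t : F} (ht : t ≠ 0) : χ t ≠ 0 :=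
  ((isUnit_iff_ne_zero.2 ht).map χ).ne_zero

lemma chi_inv (_h : Oct χ ζ α f) (t : F) : χ t⁻¹ = (χ t)⁻¹ := by
  rw [← MulChar.inv_apply', MulChar.inv_apply_eq_inv']

lemma ex8 (h : Oct χ ζ α f) {t : F} (ht : t ≠ 0) : ∃ k < 8, χ t = ζ ^ k := by
  obtain ⟨i, hi, h'⟩ := h.prim.eq_pow_of_pow_eq_one (h.pow8 ht)
  exact ⟨i, hi, h'.symm⟩

lemma alpha_ne (h : Oct χ ζ α f) : α ≠ 0 := by
  rintro rfl; have := h.hχ; rw [MulChar.map_zero] at this; exact h.z0 this.symm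

lemma neg_one_eq (h : Oct χ ζ α f) : α ^ (4 * f) = -1 := by
  have h1 : (α ^ (4 * f)) ^ 2 = 1 := by
    rw [← pow_mul]
    have := FiniteField.pow_card_sub_one_eq_one α h.alpha_ne
    rw [h.hcard] at this
    rw [← this]; congr 1; omega
  rcases sq_eq_sq_iff_eq_or_eq_neg.1 (h1.trans (one_pow 2).symm) with h2 | h2
  · exfalso
    have h3 := h.chipow (4 * f)
    rw [h2, map_one, pow_mul, h.hζ, Odd.neg_one_pow (Nat.odd_iff.2 h.hf)] at h3
    norm_num at h3
  · exact h2

lemma chi_neg_one (h : Oct χ ζ α f) : χ (-1) = -1 := by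
  rw [← h.neg_one_eq, h.chipow, pow_mul, h.hζ, Odd.neg_one_pow (Nat.odd_iff.2 h.hf)]

lemma chi_neg (h : Oct χ ζ α f) (t : F) : χ (-t) = - χ t := by
  rw [← neg_one_mul, map_mul, h.chi_neg_one, neg_one_mul]

lemma chi_sub (h : Oct χ ζ α f) (s t : F) : χ (s - t) = - χ (t - s) := by
  rw [← h.chi_neg, neg_sub]

lemma rc (h : Oct χ ζ α f) : ringChar F ≠ 2 := by
  intro h2
  have := FiniteField.even_card_iff_char_two.1 h2
  rw [h.hcard] at this; omega

lemma two_ne (h : Oct χ ζ α f) : (2 : F) ≠ 0 := Ring.two_ne_zero h.rc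

lemma quad (h : Oct χ ζ α f) (t : F) : ((quadraticChar F t : ℤ) : ℂ) = χ t ^ 4 := by
  by_cases ht : t = 0
  · rw [ht, MulChar.map_zero, MulChar.map_zero]; norm_num
  have h8 := h.pow8 ht
  rcases quadraticChar_dichotomy ht with h1 | h1
  · obtain ⟨s, rfl⟩ := (quadraticChar_one_iff_isSquare ht).1 h1
    rw [h1, map_mul, ← sq, ← pow_mul, h.pow8 (by rintro rfl; simp at ht)]
    norm_num
  · have hns := quadraticChar_neg_one_iff_not_isSquare.1 h1
    obtain ⟨n, rfl⟩ := h.ex ht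
    rw [h1, h.chipow, ← pow_mul, mul_comm, pow_mul, h.hζ, Odd.neg_one_pow]
    · norm_num
    · by_contra hn
      rw [Nat.not_odd_iff_even] at hn
      exact hns (hn.isSquare_pow α)

lemma sum_sq (h : Oct χ ζ α f) (φ : F → ℂ) : ∑ s, φ (s ^ 2) = ∑ w, φ w * (1 + χ w ^ 4) := by
  rw [← Finset.sum_fiberwise (s := Finset.univ) (g := fun s : F => s ^ 2)]
  refine Finset.sum_congr rfl fun w _ => ?_
  have h1 : ∑ s ∈ Finset.univ.filter (fun s : F => s ^ 2 = w), φ (s ^ 2)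
      = ∑ s ∈ Finset.univ.filter (fun s : F => s ^ 2 = w), φ w :=
    Finset.sum_congr rfl fun s hs => by rw [(Finset.mem_filter.1 hs).2]
  rw [h1, Finset.sum_const, nsmul_eq_mul, mul_comm]
  congr 1
  have h2 := quadraticChar_card_sqrts h.rc w
  have h3 : ({x : F | x ^ 2 = w} : Set F).toFinset = Finset.univ.filter (fun s : F => s ^ 2 = w) := by
    ext; simp
  rw [h3] at h2
  rw [← h.quad w, add_comm]
  exact_mod_cast h2

/-- Sums `∑ χ(t)^j η(1-t)`. -/
noncomputable def S (χ : MulChar F ℂ) (j : ℕ) : ℂ := ∑ t, χ t ^ j * χ (1 - t) ^ 4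

/-- Sums `∑ χ(t)^j χ(1-t)²`. -/
noncomputable def T (χ : MulChar F ℂ) (j : ℕ) : ℂ := ∑ t, χ t ^ j * χ (1 - t) ^ 2

lemma pow_ne (h : Oct χ ζ α f) {n : ℕ} (hn : n % 8 ≠ 0) : χ ^ n ≠ 1 := by
  intro h1
  have h2 : (χ ^ n) α = 1 := by
    rw [h1]; exact MulChar.one_apply (isUnit_iff_ne_zero.2 h.alpha_ne)
  rw [MulChar.pow_apply' _ (by omega), h.hχ] at h2
  exact hn (Nat.mod_eq_zero_of_dvd (h.prim.dvd_of_pow_eq_one _ h2))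

set_option linter.unusedSectionVars false in
lemma S_eq (j : ℕ) (hj : j ≠ 0) : S χ j = jacobiSum (χ ^ j) (χ ^ 4) := by
  simp only [S, jacobiSum, MulChar.pow_apply' _ hj, MulChar.pow_apply' χ (show 4 ≠ 0 by norm_num)]

set_option linter.unusedSectionVars false in
lemma T_eq (j : ℕ) (hj : j ≠ 0) : T χ j = jacobiSum (χ ^ j) (χ ^ 2) := by
  simp only [T, jacobiSum, MulChar.pow_apply' _ hj, MulChar.pow_apply' χ (show 2 ≠ 0 by norm_num)]

lemma chi8 (h : Oct χ ζ α f) : χ ^ 8 = 1 := by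
  ext t
  rw [MulChar.pow_apply_coe, h.pow8 t.ne_zero, MulChar.one_apply_coe]

lemma S8 (h : Oct χ ζ α f) : S χ 8 = -1 := by
  rw [S_eq _ (by norm_num), h.chi8, jacobiSum_one_nontrivial (h.pow_ne (by norm_num))]

lemma T8 (h : Oct χ ζ α f) : T χ 8 = -1 := by
  rw [T_eq _ (by norm_num), h.chi8, jacobiSum_one_nontrivial (h.pow_ne (by norm_num))]

lemma inv_pow_eq (h : Oct χ ζ α f) {a b : ℕ} (hab : a + b = 8) : (χ ^ a)⁻¹ = χ ^ b := by
  rw [inv_eq_iff_mul_eq_one, ← pow_add, hab, h.chi8]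

lemma S4 (h : Oct χ ζ α f) : S χ 4 = -1 := by
  have h1 := jacobiSum_nontrivial_inv (h.pow_ne (n := 4) (by norm_num))
  rw [h.inv_pow_eq (show 4 + 4 = 8 by norm_num)] at h1
  rw [S_eq _ (by norm_num), h1, MulChar.pow_apply' _ (by norm_num), h.chi_neg_one]
  norm_num

lemma T6 (h : Oct χ ζ α f) : T χ 6 = -1 := by
  have h1 := jacobiSum_nontrivial_inv (h.pow_ne (n := 6) (by norm_num))
  rw [h.inv_pow_eq (show 6 + 2 = 8 by norm_num)] at h1
  rw [T_eq _ (by norm_num), h1, MulChar.pow_apply' _ (by norm_num), h.chi_neg_one]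
  norm_num

lemma T4 : T χ 4 = S χ 2 := by
  rw [T_eq _ (by norm_num), S_eq _ (by norm_num), jacobiSum_comm]

lemma rc' (_h : Oct χ ζ α f) : ringChar ℂ ≠ ringChar F := by
  rw [ringChar.eq_zero]
  exact (CharP.ringChar_ne_zero_of_finite F).symm

lemma S17 (h : Oct χ ζ α f) : S χ 1 * S χ 7 = Fintype.card F := by
  rw [S_eq _ (by norm_num), S_eq _ (by norm_num),
    ← jacobiSum_mul_jacobiSum_inv h.rc' (h.pow_ne (n := 1) (by norm_num))
      (h.pow_ne (n := 4) (by norm_num)) (by rw [← pow_add]; exact h.pow_ne (by norm_num)),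
    h.inv_pow_eq (show 1 + 7 = 8 by norm_num), h.inv_pow_eq (show 4 + 4 = 8 by norm_num)]

lemma S26 (h : Oct χ ζ α f) : S χ 2 * S χ 6 = Fintype.card F := by
  rw [S_eq _ (by norm_num), S_eq _ (by norm_num),
    ← jacobiSum_mul_jacobiSum_inv h.rc' (h.pow_ne (n := 2) (by norm_num))
      (h.pow_ne (n := 4) (by norm_num)) (by rw [← pow_add]; exact h.pow_ne (by norm_num)),
    h.inv_pow_eq (show 2 + 6 = 8 by norm_num), h.inv_pow_eq (show 4 + 4 = 8 by norm_num)]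

lemma sum_pow_zero (h : Oct χ ζ α f) {j : ℕ} (hj : j % 8 ≠ 0) : ∑ t, χ t ^ j = 0 := by
  have := MulChar.sum_eq_zero_of_ne_one (h.pow_ne hj)
  simpa only [MulChar.pow_apply' χ (show j ≠ 0 by omega)] using this

/-- Duplication: `J(φ,φ) = J(φ,η)` when `φ(4) = 1`. -/
lemma dup (h : Oct χ ζ α f) (h2 : χ 2 ^ 2 = 1) {j : ℕ} (hj : j % 8 ≠ 0) :
    ∑ t, χ t ^ j * χ (1 - t) ^ j = S χ j := by
  have e1 : ∑ t, χ t ^ j * χ (1 - t) ^ j = ∑ t : F, χ (1 - (1 - 2 * t) ^ 2) ^ j := by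
    refine Finset.sum_congr rfl fun t _ => ?_
    have : (1 : F) - (1 - 2 * t) ^ 2 = 2 ^ 2 * (t * (1 - t)) := by ring
    rw [this, map_mul, map_pow, h2, one_mul, map_mul, mul_pow]
  have e2 : ∑ t : F, χ (1 - (1 - 2 * t) ^ 2) ^ j = ∑ u : F, χ (1 - u ^ 2) ^ j := by
    have hb : Function.Bijective (fun t : F => 1 - 2 * t) := by
      apply Function.Injective.bijective_of_finite
      intro a b hab
      simp only [sub_right_inj] at hab
      exact mul_left_cancel₀ h.two_ne hab
    exact hb.sum_comp (fun u => χ (1 - u ^ 2) ^ j)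
  rw [e1, e2, h.sum_sq (fun w => χ (1 - w) ^ j)]
  simp only [mul_add, mul_one, Finset.sum_add_distrib]
  have e3 : ∑ w : F, χ (1 - w) ^ j = 0 := by
    rw [← h.sum_pow_zero hj]
    exact (Equiv.subLeft (1 : F)).sum_comp (fun w => χ w ^ j)
  rw [e3, zero_add, S, ← (Equiv.subLeft (1 : F)).sum_comp]
  simp

lemma T2 (h : Oct χ ζ α f) (h2 : χ 2 ^ 2 = 1) : T χ 2 = S χ 2 := h.dup h2 (by norm_num)

/-- The substitution `t ↦ t/(t-1)`. -/
lemma Todd (h : Oct χ ζ α f) (h2 : χ 2 ^ 2 = 1) {j : ℕ} (hj : j = 3 ∨ j = 7) : T χ j = - S χ j := by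
  rw [← h.dup h2 (by omega), T, ← Finset.sum_neg_distrib]
  have hz : ∀ g : F → ℂ, g 1 = 0 → ∑ t, g t = ∑ t ∈ Finset.univ.erase 1, g t := by
    intro g hg
    rw [← Finset.add_sum_erase _ _ (Finset.mem_univ (1 : F)), hg, zero_add]
  rw [hz _ (by simp [MulChar.map_zero χ]), hz (fun t => - (χ t ^ j * χ (1 - t) ^ j)) (by
    have : j ≠ 0 := by omega
    simp [this, MulChar.map_zero χ])]
  refine Finset.sum_nbij' (fun t => t / (t - 1)) (fun t => t / (t - 1)) ?_ ?_ ?_ ?_ ?_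
  · intro t ht
    have : t - 1 ≠ 0 := sub_ne_zero.2 (Finset.ne_of_mem_erase ht)
    refine Finset.mem_erase.2 ⟨?_, Finset.mem_univ _⟩
    rw [Ne, div_eq_one_iff_eq this]
    intro h; exact one_ne_zero (α := F) (by linear_combination h)
  · intro t ht
    have : t - 1 ≠ 0 := sub_ne_zero.2 (Finset.ne_of_mem_erase ht)
    refine Finset.mem_erase.2 ⟨?_, Finset.mem_univ _⟩
    rw [Ne, div_eq_one_iff_eq this]
    intro h; exact one_ne_zero (α := F) (by linear_combination h)
  · intro t ht
    have : t - 1 ≠ 0 := sub_ne_zero.2 (Finset.ne_of_mem_erase ht)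
    have h3 : t / (t - 1) - 1 = 1 / (t - 1) := by field_simp; ring
    simp only [h3]; field_simp
  · intro t ht
    have : t - 1 ≠ 0 := sub_ne_zero.2 (Finset.ne_of_mem_erase ht)
    have h3 : t / (t - 1) - 1 = 1 / (t - 1) := by field_simp; ring
    simp only [h3]; field_simp
  · intro t ht
    have : t - 1 ≠ 0 := sub_ne_zero.2 (Finset.ne_of_mem_erase ht)
    have h3 : 1 - t / (t - 1) = - (t - 1)⁻¹ := by field_simp; ring
    have h4 := h.pow8 this
    have h5 := h.ne0 this
    rw [h3, h.chi_neg, div_eq_mul_inv, map_mul, h.chi_inv, h.chi_sub 1 t]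
    rcases hj with rfl | rfl
    · field_simp
      linear_combination (χ t ^ 3) * h4
    · field_simp
      linear_combination (χ t ^ 7) * (χ (t - 1) ^ 8 + 1) * h4

lemma T15 (h : Oct χ ζ α f) (h2 : χ 2 ^ 2 = 1) : T χ 1 + T χ 5 = -2 * S χ 2 := by
  -- a square root of minus one
  set i : F := α ^ (2 * f) with hi
  have hi2 : i ^ 2 = -1 := by rw [hi, ← pow_mul, ← h.neg_one_eq]; congr 1; ring
  have hi0 : i ≠ 0 := by intro h0; rw [h0] at hi2; norm_num at hi2
  have hci : χ i ^ 2 = -1 := by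
    rw [← map_pow, hi2, h.chi_neg_one]
  have hc2 : χ (2 : F) ^ 2 = 1 := h2
  have two0 := h.two_ne
  -- scaling
  have scale : ∀ c : F, c ≠ 0 → χ c ^ 2 = -1 → ∑ u, χ u ^ 2 * χ (u - c) ^ 4 = - S χ 2 := by
    intro c hc hc1
    have hb : Function.Bijective (fun t : F => c * t) := by
      apply Function.Injective.bijective_of_finite
      intro a b hab
      exact mul_left_cancel₀ hc hab
    rw [← hb.sum_comp (fun u => χ u ^ 2 * χ (u - c) ^ 4), S, ← Finset.sum_neg_distrib]
    refine Finset.sum_congr rfl fun t _ => ?_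
    have : c * t - c = - (c * (1 - t)) := by ring
    simp only [this, h.chi_neg, map_mul]
    linear_combination (χ t ^ 2 * χ (1 - t) ^ 4) * (χ c ^ 4 - χ c ^ 2 + 1) * hc1
  -- step 1
  have e1 : T χ 1 + T χ 5 = ∑ s : F, χ s ^ 2 * χ (1 - s ^ 2) ^ 2 := by
    have := h.sum_sq (fun w => χ w * χ (1 - w) ^ 2)
    simp only [map_pow] at this
    rw [this, T, T, ← Finset.sum_add_distrib]
    refine Finset.sum_congr rfl fun t _ => ?_
    ring
  -- step 2
  let u : F → F := fun s => s⁻¹ - s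
  have pt : ∀ s ∈ Finset.univ.erase (0 : F), χ s ^ 2 * χ (1 - s ^ 2) ^ 2
      = χ (u s) ^ 2 * χ (u s + 2 * i) ^ 4 + (if s = i then χ (2 * i) ^ 2 else 0) := by
    intro s hs
    have hs0 : s ≠ 0 := Finset.ne_of_mem_erase hs
    have c0 := h.ne0 hs0
    have c8 := h.pow8 hs0
    have a1 : 1 - s ^ 2 = s * u s := by simp only [u]; field_simp
    have a2 : s * (u s + 2 * i) = (1 + i * s) ^ 2 := by
      simp only [u]; field_simp; linear_combination (-s ^ 2) * hi2
    by_cases hsi : s = i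
    · have a3 : u s + 2 * i = 0 := by
        have : s * (u s + 2 * i) = 0 := by rw [a2, hsi]; linear_combination (i ^ 2 + 1) * hi2
        exact (mul_eq_zero.1 this).resolve_left hs0
      have a4 : 1 - s ^ 2 = 2 := by rw [hsi, hi2]; norm_num
      rw [a3, if_pos hsi, a4, hsi, MulChar.map_zero, map_mul, hc2]
      linear_combination -χ i ^ 2 * hc2
    · have a3 : 1 + i * s ≠ 0 := by
        intro h0; apply hsi
        linear_combination (-i) * h0 + s * hi2
      have a4 : (χ s * χ (u s + 2 * i)) ^ 4 = 1 := by
        rw [← map_mul, a2, map_pow, ← pow_mul, h.pow8 a3]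
      rw [if_neg hsi, a1, map_mul, add_zero]
      linear_combination χ (u s) ^ 2 * (-χ s ^ 4 * a4 + χ (u s + 2 * i) ^ 4 * c8)
  -- number of solutions
  have cnt : ∀ φ : F → ℂ, ∑ s ∈ Finset.univ.erase (0 : F), φ (u s)
      = ∑ v, φ v * (1 + χ (v ^ 2 + 4) ^ 4) := by
    intro φ
    rw [← Finset.sum_fiberwise (s := Finset.univ.erase (0 : F)) (g := u)]
    refine Finset.sum_congr rfl fun v _ => ?_
    have h1 : ∑ s ∈ (Finset.univ.erase (0 : F)).filter (fun s : F => u s = v), φ (u s)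
        = ∑ s ∈ (Finset.univ.erase (0 : F)).filter (fun s : F => u s = v), φ v :=
      Finset.sum_congr rfl fun s hs => by rw [(Finset.mem_filter.1 hs).2]
    rw [h1, Finset.sum_const, nsmul_eq_mul, mul_comm]
    congr 1
    have h2 := quadraticChar_card_sqrts h.rc (v ^ 2 + 4)
    have h3 : (({x : F | x ^ 2 = v ^ 2 + 4} : Set F).toFinset).card
        = ((Finset.univ.erase (0 : F)).filter (fun s : F => u s = v)).card := by
      symm
      refine Finset.card_nbij' (fun s => 2 * s + v) (fun r => (r - v) / 2) ?_ ?_ ?_ ?_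
      · intro s hs
        have hs1 := Finset.mem_filter.1 hs
        have hs0 : s ≠ 0 := Finset.ne_of_mem_erase hs1.1
        have hs2 : s⁻¹ - s = v := hs1.2
        have hs3 : 1 - s ^ 2 = v * s := by rw [← hs2]; field_simp
        simp only [Set.coe_toFinset, Set.mem_ofPred_eq]
        linear_combination (-4) * hs3
      · intro r hr
        simp only [Set.coe_toFinset, Set.mem_ofPred_eq] at hr
        have hr1 : ((r - v) / 2) * ((r - v) / 2 + v) = 1 := by
          field_simp; linear_combination hr
        have hr0 : (r - v) / 2 ≠ 0 := by intro h0; rw [h0] at hr1; simp at hr1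
        simp only [Finset.coe_filter, Set.mem_ofPred_eq, Finset.mem_erase, Finset.mem_univ, and_true]
        refine ⟨hr0, ?_⟩
        simp only [u]
        rw [inv_eq_of_mul_eq_one_right hr1]; ring
      · intro s _; simp only []; field_simp; ring
      · intro r _; simp only []; field_simp; ring
    rw [h3] at h2
    rw [← h.quad, add_comm]
    exact_mod_cast h2
  have h4i : 2 * i ≠ 0 := mul_ne_zero two0 hi0
  have h2i : χ (2 * i) ^ 2 = -1 := by rw [map_mul, mul_pow, hc2, hci]; norm_num
  have s1 := scale (2 * i) h4i h2i
  have s2 := scale (-(2 * i)) (neg_ne_zero.2 h4i) (by rw [h.chi_neg, neg_sq, h2i])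
  have e2 : ∀ v : F, χ v ^ 2 * χ (v + 2 * i) ^ 4 * (1 + χ (v ^ 2 + 4) ^ 4)
      = χ v ^ 2 * χ (v - -(2 * i)) ^ 4 + χ v ^ 2 * χ (v - 2 * i) ^ 4
        - (if v = -(2 * i) then χ (2 * i) ^ 2 else 0) := by
    intro v
    have b1 : v ^ 2 + 4 = (v + 2 * i) * (v - 2 * i) := by linear_combination 4 * hi2
    rw [sub_neg_eq_add, b1, map_mul]
    by_cases hv : v = -(2 * i)
    · have b2 : v + 2 * i = 0 := by rw [hv]; ring
      have b3 : v - 2 * i = - (2 * (2 * i)) := by rw [hv]; ring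
      rw [b2, b3, if_pos hv, hv, MulChar.map_zero, h.chi_neg, h.chi_neg, map_mul _ (2 : F) (2 * i)]
      linear_combination (-(χ (2 * i) ^ 2) * (χ (2 * i) ^ 4 * (χ 2 ^ 2 + 1))) * hc2
         - χ (2 * i) ^ 2 * (χ (2 * i) ^ 2 - 1) * h2i
    · have b2 : v + 2 * i ≠ 0 := by intro h0; apply hv; linear_combination h0
      rw [if_neg hv]
      linear_combination χ v ^ 2 * χ (v - 2 * i) ^ 4 * h.pow8 b2
  rw [e1, ← Finset.add_sum_erase _ _ (Finset.mem_univ (0 : F)), Finset.sum_congr rfl pt,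
    Finset.sum_add_distrib, cnt (fun v => χ v ^ 2 * χ (v + 2 * i) ^ 4),
    Finset.sum_congr rfl (fun v _ => e2 v), Finset.sum_sub_distrib, Finset.sum_add_distrib, s1, s2]
  simp only [Finset.sum_ite_eq', Finset.mem_univ, if_true, Finset.mem_erase, and_true]
  rw [if_pos hi0, MulChar.map_zero]
  ring

end

end Oct
namespace Oct

section

open Classical in
/-- Orthogonality for eighth roots of unity. -/
lemma orth (w : ℂ) (hw : w = 0 ∨ w ^ 8 = 1) :
    w ^ 1 + w ^ 2 + w ^ 3 + w ^ 4 + w ^ 5 + w ^ 6 + w ^ 7 + w ^ 8 = if w = 1 then 8 else 0 := by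
  rcases hw with rfl | hw
  · norm_num
  · split_ifs with h1
    · rw [h1]; norm_num
    · have : (w - 1) * (w ^ 1 + w ^ 2 + w ^ 3 + w ^ 4 + w ^ 5 + w ^ 6 + w ^ 7 + w ^ 8) = 0 := by
        linear_combination w * hw
      exact (mul_eq_zero.1 this).resolve_left (sub_ne_zero.2 h1)

variable {F : Type*} [Field F] [Fintype F] [DecidableEq F]
    {χ : MulChar F ℂ} {ζ : ℂ} {α : F} {f : ℕ}

lemma zero_or (h : Oct χ ζ α f) (t : F) : χ t = 0 ∨ χ t ^ 8 = 1 := by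
  by_cases ht : t = 0
  · left; rw [ht, MulChar.map_zero]
  · right; exact h.pow8 ht

open Classical in
lemma orth_sum (h : Oct χ ζ α f) (φ : F → ℂ) :
    8 * ∑ t ∈ Finset.univ.filter (fun t : F => χ t = 1), φ t
      = (∑ t, χ t ^ 1 * φ t) + (∑ t, χ t ^ 2 * φ t) + (∑ t, χ t ^ 3 * φ t) + (∑ t, χ t ^ 4 * φ t)
        + (∑ t, χ t ^ 5 * φ t) + (∑ t, χ t ^ 6 * φ t) + (∑ t, χ t ^ 7 * φ t)
        + (∑ t, χ t ^ 8 * φ t) := by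
  simp only [← Finset.sum_add_distrib, Finset.mul_sum, Finset.sum_filter]
  refine Finset.sum_congr rfl fun t _ => ?_
  have := orth (χ t) (h.zero_or t)
  split_ifs at this ⊢ with h1
  · rw [h1]; ring
  · linear_combination (-φ t) * this

open Classical in
lemma decomp (h : Oct χ ζ α f) {j : ℕ} (hj : j ≠ 0) (φ : F → ℂ) :
    ∑ t, χ t ^ j * φ t = ∑ k ∈ Finset.range 8, ζ ^ (j * k) *
      ∑ t ∈ Finset.univ.filter (fun t : F => χ t = ζ ^ k), φ t := by
  simp only [Finset.mul_sum, Finset.sum_filter]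
  rw [Finset.sum_comm]
  refine Finset.sum_congr rfl fun t _ => ?_
  by_cases ht : t = 0
  · rw [ht, MulChar.map_zero, zero_pow hj, zero_mul]
    symm
    apply Finset.sum_eq_zero
    intro k _
    rw [if_neg (pow_ne_zero k h.z0).symm, mul_zero]
  · obtain ⟨k, hk, hk1⟩ := h.ex8 ht
    rw [Finset.sum_eq_single k]
    · rw [if_pos hk1, hk1, ← pow_mul, mul_comm k j]
    · intro l hl hlk
      rw [if_neg, mul_zero]
      intro h1
      exact hlk (h.prim.pow_inj (Finset.mem_range.1 hl) hk (h1.symm.trans hk1))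
    · intro h1; exact absurd (Finset.mem_range.2 hk) h1

open Classical in
/-- The integers `∑_{t ∈ C_k} η(1-t)`. -/
noncomputable def e (χ : MulChar F ℂ) (ζ : ℂ) (k : ℕ) : ℤ :=
  ∑ t ∈ Finset.univ.filter (fun t : F => χ t = ζ ^ k), quadraticChar F (1 - t)

open Classical in
lemma e_cast (h : Oct χ ζ α f) (k : ℕ) :
    (e χ ζ k : ℂ) = ∑ t ∈ Finset.univ.filter (fun t : F => χ t = ζ ^ k), χ (1 - t) ^ 4 := by
  rw [e]; push_cast
  exact Finset.sum_congr rfl fun t _ => h.quad _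

lemma zmod (h : Oct χ ζ α f) (n : ℕ) : ζ ^ (n % 8) = ζ ^ n := by
  conv_rhs => rw [← Nat.mod_add_div n 8, pow_add, pow_mul, h.z8, one_pow, mul_one]

lemma S_decomp (h : Oct χ ζ α f) {j : ℕ} (hj : j ≠ 0) :
    S χ j = ∑ k ∈ Finset.range 8, ζ ^ ((j * k) % 8) * (e χ ζ k : ℂ) := by
  rw [S, h.decomp hj (fun t => χ (1 - t) ^ 4)]
  exact Finset.sum_congr rfl fun k _ => by rw [h.e_cast, h.zmod]

lemma nz (h : Oct χ ζ α f) {t : F} {k : ℕ} (ht : χ t = ζ ^ k) : t ≠ 0 := by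
  rintro rfl
  rw [MulChar.map_zero] at ht
  exact pow_ne_zero k h.z0 ht.symm

open Classical in
lemma e_symm (h : Oct χ ζ α f) {k l : ℕ} (hkl : k + l = 8) : e χ ζ l = (-1) ^ k * e χ ζ k := by
  have hz : ζ ^ k * ζ ^ l = 1 := by rw [← pow_add, hkl, h.z8]
  have key : (e χ ζ l : ℂ) = (-1) ^ k * e χ ζ k := by
    rw [h.e_cast, h.e_cast, Finset.mul_sum]
    refine Finset.sum_nbij' (fun t => t⁻¹) (fun t => t⁻¹) ?_ ?_ ?_ ?_ ?_
    · intro t ht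
      simp only [Finset.mem_filter, Finset.mem_univ, true_and] at ht ⊢
      rw [h.chi_inv, ht, inv_eq_of_mul_eq_one_left hz]
    · intro t ht
      simp only [Finset.mem_filter, Finset.mem_univ, true_and] at ht ⊢
      rw [h.chi_inv, ht, inv_eq_of_mul_eq_one_right hz]
    · intro t _; simp
    · intro t _; simp
    · intro t ht
      simp only [Finset.mem_filter, Finset.mem_univ, true_and] at ht
      have t0 := h.nz ht
      have e1 : 1 - t⁻¹ = -(t⁻¹ * (1 - t)) := by field_simp; ring
      have e2 : (ζ ^ l)⁻¹ = ζ ^ k := inv_eq_of_mul_eq_one_left hz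
      have e3 : (ζ ^ k) ^ 4 = (-1) ^ k := by rw [← pow_mul, mul_comm, pow_mul, h.hζ]
      have e4 : ((-1 : ℂ) ^ k) ^ 2 = 1 := by rw [← pow_mul, mul_comm, pow_mul]; norm_num
      rw [e1, h.chi_neg, map_mul, h.chi_inv, ht, e2]
      have e5 : (-(ζ ^ k * χ (1 - t))) ^ 4 = (ζ ^ k) ^ 4 * χ (1 - t) ^ 4 := by ring
      rw [e5, e3]
      linear_combination (- χ (1 - t) ^ 4) * e4
  exact_mod_cast key

/-- The integer data attached to the Jacobi sums of order eight. -/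
lemma jac (h : Oct χ ζ α f) : ∃ A B X Y : ℤ,
    S χ 3 + S χ 7 = 2 * A ∧
    A ^ 2 + 2 * B ^ 2 = Fintype.card F ∧ X ^ 2 + 4 * Y ^ 2 = Fintype.card F ∧
    4 * e χ ζ 0 = X - 1 + 2 * A := by
  have r1 := h.e_symm (show 1 + 7 = 8 by norm_num)
  have r2 := h.e_symm (show 2 + 6 = 8 by norm_num)
  have r3 := h.e_symm (show 3 + 5 = 8 by norm_num)
  norm_num at r1 r2 r3
  have hz := h.hζ
  have q1 := h.S17
  have q2 := h.S26
  have s1 := h.S_decomp (j := 1) (by norm_num)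
  have s2 := h.S_decomp (j := 2) (by norm_num)
  have s3 := h.S_decomp (j := 3) (by norm_num)
  have s6 := h.S_decomp (j := 6) (by norm_num)
  have s7 := h.S_decomp (j := 7) (by norm_num)
  have s8 := h.S_decomp (j := 8) (by norm_num)
  rw [h.S8] at s8
  have red : ∀ n : ℕ, ζ ^ (n + 4) = - ζ ^ n := fun n => by rw [pow_add, hz]; ring
  have z4 : ζ ^ 4 = -1 := hz
  simp only [Finset.sum_range_succ, Finset.sum_range_zero, r1, r2, r3] at s1 s2 s3 s6 s7 s8
  norm_num at s1 s2 s3 s6 s7 s8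
  generalize hE0 : e χ ζ 0 = e0 at *
  generalize hE1 : e χ ζ 1 = e1 at *
  generalize hE2 : e χ ζ 2 = e2 at *
  generalize hE3 : e χ ζ 3 = e3 at *
  generalize hE4 : e χ ζ 4 = e4 at *
  have z5 : ζ ^ 5 = - ζ := by rw [red 1, pow_one]
  have z6 : ζ ^ 6 = - ζ ^ 2 := red 2
  have z7 : ζ ^ 7 = - ζ ^ 3 := red 3
  have S1' : S χ 1 = ((e0 - e4 : ℤ) : ℂ) + ((e1 + e3 : ℤ) : ℂ) * (ζ + ζ ^ 3) := by
    rw [s1]; simp only [z4, z5, z6, z7]; push_cast; ring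
  have S7' : S χ 7 = ((e0 - e4 : ℤ) : ℂ) - ((e1 + e3 : ℤ) : ℂ) * (ζ + ζ ^ 3) := by
    rw [s7]; simp only [z4, z5, z6, z7]; push_cast; ring
  have S3' : S χ 3 = ((e0 - e4 : ℤ) : ℂ) + ((e1 + e3 : ℤ) : ℂ) * (ζ + ζ ^ 3) := by
    rw [s3]; simp only [z4, z5, z6, z7]; push_cast; ring
  have S2' : S χ 2 = ((e0 + e4 - 2 * e2 : ℤ) : ℂ) + 2 * ((e1 - e3 : ℤ) : ℂ) * ζ ^ 2 := by
    rw [s2]; simp only [z4, z5, z6, z7]; push_cast; ring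
  have S6' : S χ 6 = ((e0 + e4 - 2 * e2 : ℤ) : ℂ) - 2 * ((e1 - e3 : ℤ) : ℂ) * ζ ^ 2 := by
    rw [s6]; simp only [z4, z5, z6, z7]; push_cast; ring
  refine ⟨e0 - e4, e1 + e3, e0 + e4 - 2 * e2, e1 - e3, ?_, ?_, ?_, ?_⟩
  · rw [S3', S7']; ring
  · rw [S1', S7'] at q1
    have : (((e0 - e4) ^ 2 + 2 * (e1 + e3) ^ 2 : ℤ) : ℂ) = ((Fintype.card F : ℤ) : ℂ) := by
      push_cast at q1 ⊢
      rw [← q1]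
      linear_combination ((e1 + e3 : ℂ) ^ 2 * (ζ ^ 2 + 2)) * hz
    exact_mod_cast this
  · rw [S2', S6'] at q2
    have : (((e0 + e4 - 2 * e2) ^ 2 + 4 * (e1 - e3) ^ 2 : ℤ) : ℂ) = ((Fintype.card F : ℤ) : ℂ) := by
      push_cast at q2 ⊢
      rw [← q2]
      linear_combination (4 * (e1 - e3 : ℂ) ^ 2) * hz
    exact_mod_cast this
  · have t8 : (((e0 + e4 + 2 * e2 : ℤ)) : ℂ) = ((-1 : ℤ) : ℂ) := by
      push_cast; linear_combination -s8
    have t8' : e0 + e4 + 2 * e2 = -1 := by exact_mod_cast t8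
    linarith

end

end Oct
namespace Oct

section

variable {F : Type*} [Field F] [Fintype F] [DecidableEq F]
    {χ : MulChar F ℂ} {ζ : ℂ} {α : F} {f : ℕ}

lemma sum8 (h : Oct χ ζ α f) : ∑ t, χ t ^ 8 = 8 * f := by
  rw [← Finset.add_sum_erase _ _ (Finset.mem_univ (0 : F)), MulChar.map_zero,
    Finset.sum_congr rfl (fun t ht => h.pow8 (Finset.ne_of_mem_erase ht))]
  rw [Finset.sum_const, Finset.card_erase_of_mem (Finset.mem_univ _), Finset.card_univ, h.hcard]
  simp

open Classical in
lemma card_class (h : Oct χ ζ α f) (w : ℂ) (hw : w ^ 8 = 1) :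
    (Finset.univ.filter (fun t : F => χ t = w)).card = f := by
  have w0 : w ≠ 0 := by rintro rfl; norm_num at hw
  have h1 : ∀ t : F, (if χ t = w then (8 : ℂ) else 0) = (χ t ^ 1 * w⁻¹ ^ 1 + χ t ^ 2 * w⁻¹ ^ 2
      + χ t ^ 3 * w⁻¹ ^ 3 + χ t ^ 4 * w⁻¹ ^ 4 + χ t ^ 5 * w⁻¹ ^ 5 + χ t ^ 6 * w⁻¹ ^ 6
      + χ t ^ 7 * w⁻¹ ^ 7 + χ t ^ 8 * w⁻¹ ^ 8) := by
    intro t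
    simp only [← mul_pow]
    rw [orth (χ t * w⁻¹)]
    · simp only [mul_inv_eq_one₀ w0]
    · rcases h.zero_or t with h0 | h0
      · left; rw [h0, zero_mul]
      · right; rw [mul_pow, h0, inv_pow, hw]; norm_num
  have h2 : ∑ t : F, (if χ t = w then (8 : ℂ) else 0) = 8 * f := by
    simp only [h1, Finset.sum_add_distrib, ← Finset.sum_mul]
    rw [h.sum8, h.sum_pow_zero (j := 1) (by norm_num), h.sum_pow_zero (j := 2) (by norm_num),
      h.sum_pow_zero (j := 3) (by norm_num), h.sum_pow_zero (j := 4) (by norm_num),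
      h.sum_pow_zero (j := 5) (by norm_num), h.sum_pow_zero (j := 6) (by norm_num),
      h.sum_pow_zero (j := 7) (by norm_num), inv_pow w 8, hw]
    norm_num
  rw [← Finset.sum_filter, Finset.sum_const, nsmul_eq_mul] at h2
  have h3 : ((Finset.univ.filter (fun t : F => χ t = w)).card : ℂ) = f := by
    linear_combination h2 / 8
  exact_mod_cast h3

open Classical in
/-- The cyclotomic numbers `#{t ∈ C_0 : χ(t-1) = w}`. -/
noncomputable def N (χ : MulChar F ℂ) (w : ℂ) : ℕ :=
  (Finset.univ.filter (fun t : F => χ t = 1 ∧ χ (t - 1) = w)).card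

open Classical in
lemma N_neg (h : Oct χ ζ α f) (w : ℂ) : N χ (-w) = N χ w := by
  have aux : ∀ t : F, χ t = 1 → χ (t⁻¹ - 1) = - χ (t - 1) := by
    intro t ht
    have t0 : t ≠ 0 := by rintro rfl; rw [MulChar.map_zero] at ht; norm_num at ht
    have e1 : t⁻¹ - 1 = -(t⁻¹ * (t - 1)) := by field_simp; ring
    rw [e1, h.chi_neg, map_mul, h.chi_inv, ht, inv_one, one_mul]
  unfold N
  refine Finset.card_nbij' (fun t => t⁻¹) (fun t => t⁻¹) ?_ ?_ ?_ ?_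
  · intro t ht
    simp only [Finset.coe_filter, Finset.mem_univ, true_and, Set.mem_ofPred_eq] at ht ⊢
    rw [aux t ht.1, ht.2, h.chi_inv, ht.1]; simp
  · intro t ht
    simp only [Finset.coe_filter, Finset.mem_univ, true_and, Set.mem_ofPred_eq] at ht ⊢
    rw [aux t ht.1, ht.2, h.chi_inv, ht.1]; simp
  · intro t _; simp
  · intro t _; simp

open Classical in
lemma fiber (h : Oct χ ζ α f) {j : ℕ} (hj : j ≠ 0) :
    ∑ t ∈ Finset.univ.filter (fun t : F => χ t = 1), χ (t - 1) ^ j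
      = ∑ k ∈ Finset.range 8, N χ (ζ ^ k) * ζ ^ ((k * j) % 8) := by
  have : ∀ k, (N χ (ζ ^ k) : ℂ) * ζ ^ ((k * j) % 8)
      = ∑ t ∈ Finset.univ.filter (fun t : F => χ t = 1),
        if χ (t - 1) = ζ ^ k then (ζ ^ k) ^ j else 0 := by
    intro k
    rw [← Finset.sum_filter, Finset.filter_filter, Finset.sum_const, nsmul_eq_mul, h.zmod, pow_mul]
    rfl
  simp only [this]
  rw [Finset.sum_comm]
  refine Finset.sum_congr rfl fun t _ => ?_
  by_cases ht : t - 1 = 0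
  · rw [ht, MulChar.map_zero, zero_pow hj]
    symm
    apply Finset.sum_eq_zero
    intro k _
    rw [if_neg (pow_ne_zero k h.z0).symm]
  · obtain ⟨k, hk, hk1⟩ := h.ex8 ht
    rw [Finset.sum_eq_single k]
    · rw [if_pos hk1, hk1]
    · intro l hl hlk
      rw [if_neg]
      intro h1
      exact hlk (h.prim.pow_inj (Finset.mem_range.1 hl) hk (h1.symm.trans hk1))
    · intro h1; exact absurd (Finset.mem_range.2 hk) h1

open Classical in
lemma sum_one8 (h : Oct χ ζ α f) :
    ∑ t ∈ Finset.univ.filter (fun t : F => χ t = 1), χ (t - 1) ^ 8 = f - 1 := by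
  have hm : (1 : F) ∈ Finset.univ.filter (fun t : F => χ t = 1) := by simp
  rw [← Finset.add_sum_erase _ _ hm, Finset.sum_congr rfl
    (fun t ht => h.pow8 (sub_ne_zero.2 (Finset.ne_of_mem_erase ht)))]
  rw [Finset.sum_const, Finset.card_erase_of_mem hm, h.card_class 1 (by norm_num), sub_self,
    MulChar.map_zero]
  have := h.hf
  rw [nsmul_eq_mul, Nat.cast_sub (by omega)]
  norm_num

/-- The linear relations between the cyclotomic numbers. -/
lemma rels (h : Oct χ ζ α f) (h2 : χ 2 ^ 2 = 1) (A : ℤ) (hA : S χ 3 + S χ 7 = 2 * A) :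
    N χ (ζ ^ 5) = N χ (ζ ^ 1) ∧ N χ (ζ ^ 4) = N χ (ζ ^ 0) ∧ N χ (ζ ^ 6) = N χ (ζ ^ 2) ∧
    N χ (ζ ^ 7) = N χ (ζ ^ 3) ∧
    (f : ℤ) - 1 = 2 * (N χ (ζ ^ 0) + N χ (ζ ^ 1) + N χ (ζ ^ 2) + N χ (ζ ^ 3)) ∧
    e χ ζ 0 = 2 * (N χ (ζ ^ 0) - N χ (ζ ^ 1) + N χ (ζ ^ 2) - N χ (ζ ^ 3)) ∧
    N χ (ζ ^ 1) = N χ (ζ ^ 3) ∧ 8 * ((N χ (ζ ^ 0) : ℤ) - N χ (ζ ^ 2)) = -1 - A := by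
  classical
  have r4 : N χ (ζ ^ 4) = N χ (ζ ^ 0) := by
    rw [← h.N_neg (ζ ^ 0)]; congr 1; linear_combination h.hζ
  have r5 : N χ (ζ ^ 5) = N χ (ζ ^ 1) := by
    rw [← h.N_neg (ζ ^ 1)]; congr 1; linear_combination ζ * h.hζ
  have r6 : N χ (ζ ^ 6) = N χ (ζ ^ 2) := by
    rw [← h.N_neg (ζ ^ 2)]; congr 1; linear_combination ζ ^ 2 * h.hζ
  have r7 : N χ (ζ ^ 7) = N χ (ζ ^ 3) := by
    rw [← h.N_neg (ζ ^ 3)]; congr 1; linear_combination ζ ^ 3 * h.hζ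
  have f8 := h.fiber (j := 8) (by norm_num)
  have f4 := h.fiber (j := 4) (by norm_num)
  have f2 := h.fiber (j := 2) (by norm_num)
  rw [h.sum_one8] at f8
  have c4 : (e χ ζ 0 : ℂ)
      = ∑ t ∈ Finset.univ.filter (fun t : F => χ t = 1), χ (t - 1) ^ 4 := by
    rw [h.e_cast, pow_zero]
    refine Finset.sum_congr rfl fun t _ => ?_
    rw [h.chi_sub 1 t]; ring
  have c2 : 8 * ∑ t ∈ Finset.univ.filter (fun t : F => χ t = 1), χ (t - 1) ^ 2 = -2 - 2 * A := by
    have d1 : ∑ t ∈ Finset.univ.filter (fun t : F => χ t = 1), χ (t - 1) ^ 2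
        = ∑ t ∈ Finset.univ.filter (fun t : F => χ t = 1), χ (1 - t) ^ 2 :=
      Finset.sum_congr rfl fun t _ => by rw [h.chi_sub 1 t]; ring
    rw [d1, h.orth_sum (fun t => χ (1 - t) ^ 2)]
    change T χ 1 + T χ 2 + T χ 3 + T χ 4 + T χ 5 + T χ 6 + T χ 7 + T χ 8 = _
    rw [h.T2 h2, h.Todd h2 (Or.inl rfl), h.Todd h2 (Or.inr rfl), T4, h.T6, h.T8]
    linear_combination h.T15 h2 - hA
  rw [← c4] at f4
  rw [f2] at c2
  simp only [Finset.sum_range_succ, Finset.sum_range_zero, r4, r5, r6, r7] at f8 f4 c2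
  norm_num at f8 f4 c2
  have z6 : ζ ^ 6 = - ζ ^ 2 := by linear_combination ζ ^ 2 * h.hζ
  rw [h.hζ, z6] at c2
  rw [h.hζ] at f4
  norm_num at r4 r5 r6 r7 ⊢
  generalize N χ 1 = n0 at *
  generalize N χ ζ = n1 at *
  generalize N χ (ζ ^ 2) = n2 at *
  generalize N χ (ζ ^ 3) = n3 at *
  have key1 : ((8 * (n0 - n2) + 1 + A : ℤ) : ℂ) = ((8 * (n3 - n1) : ℤ) : ℂ) * ζ ^ 2 := by
    push_cast; linear_combination c2 / 2
  have key2 : ((8 * (n0 - n2) + 1 + A : ℤ) : ℂ) ^ 2 = - ((8 * (n3 - n1) : ℤ) : ℂ) ^ 2 := by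
    rw [key1]; linear_combination ((8 * (n3 - n1) : ℤ) : ℂ) ^ 2 * h.hζ
  have key3 : (8 * ((n0 : ℤ) - n2) + 1 + A) ^ 2 = - (8 * ((n3 : ℤ) - n1)) ^ 2 := by
    exact_mod_cast key2
  have k4 : 8 * ((n3 : ℤ) - n1) = 0 := by nlinarith [sq_nonneg (8 * ((n0 : ℤ) - n2) + 1 + A), sq_nonneg (8 * ((n3 : ℤ) - n1))]
  have k5 : 8 * ((n0 : ℤ) - n2) + 1 + A = 0 := by
    rw [k4] at key3; nlinarith [key3]
  refine ⟨r5, r4, r6, r7, ?_, ?_, by omega, by omega⟩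
  · have : (f : ℂ) - 1 = 2 * (n0 + n1 + n2 + n3) := by rw [f8]; ring
    exact_mod_cast this
  · have : (e χ ζ 0 : ℂ) = 2 * (n0 - n1 + n2 - n3) := by rw [f4]; ring
    exact_mod_cast this

end

end Oct
namespace Oct

section

variable {F : Type*} [Field F] [Fintype F] [DecidableEq F]
    {χ : MulChar F ℂ} {ζ : ℂ} {α : F} {f : ℕ}

lemma alpha_mod (h : Oct χ ζ α f) (n : ℕ) : α ^ (n % (8 * f)) = α ^ n := by
  have := FiniteField.pow_card_sub_one_eq_one α h.alpha_ne
  rw [h.hcard, Nat.add_sub_cancel] at this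
  conv_rhs => rw [← Nat.mod_add_div n (8 * f), pow_add, pow_mul, this, one_pow, mul_one]

lemma mem8 (h : Oct χ ζ α f) {i : ℕ} (hi : i < 8) (u : F) :
    u ∈ cycClass α 8 i ↔ χ u = ζ ^ i := by
  have hf := h.hf
  simp only [cycClass, Finset.mem_image, Finset.mem_range, h.hcard]
  constructor
  · rintro ⟨j, _, rfl⟩
    rw [h.chipow, pow_add, pow_mul, h.z8, one_pow, one_mul]
  · intro hu
    obtain ⟨n, rfl⟩ := h.ex (h.nz hu)
    rw [h.chipow, ← h.zmod] at hu
    have h1 := h.prim.pow_inj (Nat.mod_lt _ (by norm_num)) hi hu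
    have h2 : n % (8 * f) % 8 = i := by rw [Nat.mod_mul_right_mod, h1]
    have h3 : n % (8 * f) < 8 * f := Nat.mod_lt _ (by omega)
    refine ⟨n % (8 * f) / 8, by omega, ?_⟩
    rw [← h.alpha_mod n]
    congr 1; omega

lemma mem2 (h : Oct χ ζ α f) (u : F) : u ∈ cycClass α 2 0 ↔ χ u ^ 4 = 1 := by
  have hf := h.hf
  simp only [cycClass, Finset.mem_image, Finset.mem_range, h.hcard]
  constructor
  · rintro ⟨j, _, rfl⟩
    rw [h.chipow, ← pow_mul, show (2 * j + 0) * 4 = 8 * j by ring, pow_mul, h.z8, one_pow]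
  · intro hu
    have u0 : u ≠ 0 := by rintro rfl; rw [MulChar.map_zero] at hu; norm_num at hu
    obtain ⟨n, rfl⟩ := h.ex u0
    rw [h.chipow, ← pow_mul] at hu
    have h1 := h.prim.dvd_of_pow_eq_one _ hu
    have h2 : n % (8 * f) % 8 = n % 8 := Nat.mod_mul_right_mod _ _ _
    have h3 : n % (8 * f) < 8 * f := Nat.mod_lt _ (by omega)
    refine ⟨n % (8 * f) / 2, by omega, ?_⟩
    rw [← h.alpha_mod n]
    congr 1; omega

lemma chi_two (h : Oct χ ζ α f) (h2 : (2 : F) ∈ cycClass α 4 0) : χ 2 ^ 2 = 1 := by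
  simp only [cycClass, Finset.mem_image, Finset.mem_range] at h2
  obtain ⟨j, _, hj⟩ := h2
  rw [← hj, h.chipow, ← pow_mul, show (4 * j + 0) * 2 = 8 * j by ring, pow_mul, h.z8, one_pow]

open Classical in
lemma count_intDiff (h : Oct χ ζ α f) {i : ℕ} (hi : i < 8) {d : F} (hd : d ≠ 0) :
    Multiset.count d (intDiff (cycClass α 8 i)) = N χ (χ d * (ζ ^ i)⁻¹) := by
  have z0 := pow_ne_zero i h.z0
  unfold intDiff N
  rw [Multiset.count_map, ← Finset.filter_val, Finset.card_val]
  refine Finset.card_nbij' (fun p => p.1 / p.2) (fun t => (t * (d / (t - 1)), d / (t - 1)))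
    ?_ ?_ ?_ ?_
  · rintro ⟨u, v⟩ huv
    simp only [Finset.coe_filter, Finset.mem_filter, Finset.mem_product, h.mem8 hi,
      Set.mem_ofPred_eq, Finset.mem_univ, true_and] at huv ⊢
    obtain ⟨⟨⟨hu, hv⟩, _⟩, hduv⟩ := huv
    have v0 := h.nz hv
    have e1 : u / v - 1 = d * v⁻¹ := by rw [hduv]; field_simp
    rw [e1, div_eq_mul_inv, map_mul, map_mul, h.chi_inv, hu, hv]
    exact ⟨mul_inv_cancel₀ z0, rfl⟩
  · intro t ht
    simp only [Finset.coe_filter, Finset.mem_filter, Finset.mem_product, h.mem8 hi,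
      Set.mem_ofPred_eq, Finset.mem_univ, true_and] at ht ⊢
    obtain ⟨h1, h3⟩ := ht
    have d0 := h.ne0 hd
    have t1 : t - 1 ≠ 0 := by
      intro h0
      rw [h0, MulChar.map_zero] at h3
      exact mul_ne_zero d0 (inv_ne_zero z0) h3.symm
    have e1 : χ (d / (t - 1)) = ζ ^ i := by
      rw [div_eq_mul_inv, map_mul, h.chi_inv, h3]; field_simp
    have e2 : d = t * (d / (t - 1)) - d / (t - 1) := by field_simp
    refine ⟨⟨⟨by rw [map_mul, h1, e1, one_mul], e1⟩, ?_⟩, e2⟩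
    intro h0
    apply hd
    rw [e2, h0, sub_self]
  · rintro ⟨u, v⟩ huv
    simp only [Finset.coe_filter, Finset.mem_filter, Finset.mem_product, h.mem8 hi,
      Set.mem_ofPred_eq] at huv ⊢
    obtain ⟨⟨⟨hu, hv⟩, _⟩, hduv⟩ := huv
    have v0 := h.nz hv
    have e1 : u / v - 1 = d * v⁻¹ := by rw [hduv]; field_simp
    have e2 : d / (u / v - 1) = v := by rw [e1]; field_simp
    rw [e2, div_mul_cancel₀ _ v0]
  · intro t ht
    simp only [Finset.coe_filter, Set.mem_ofPred_eq, Finset.mem_univ, true_and] at ht ⊢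
    have d0 := h.ne0 hd
    have t1 : t - 1 ≠ 0 := by
      intro h0
      rw [h0, MulChar.map_zero] at ht
      exact mul_ne_zero d0 (inv_ne_zero z0) ht.2.symm
    field_simp

lemma count_zero (D : Finset F) : Multiset.count 0 (intDiff D) = 0 := by
  rw [Multiset.count_eq_zero]
  unfold intDiff
  simp only [Multiset.mem_map, Finset.mem_val, Finset.mem_filter, not_exists, not_and]
  rintro ⟨u, v⟩ ⟨_, h1⟩ h2
  exact h1 (sub_eq_zero.1 h2)

lemma isDPDF (h : Oct χ ζ α f) (n0 n1 : ℕ) (h0 : ∀ w : ℂ, w ^ 4 = 1 → N χ w = n0)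
    (h1 : ∀ w : ℂ, w ^ 4 = -1 → N χ w = n1) :
    IsDPDF ![cycClass α 8 0, cycClass α 8 1, cycClass α 8 4, cycClass α 8 6]
      (Fintype.card F) 4 (fun _ => f) (cycClass α 2 0) (3 * n0 + n1) (3 * n1 + n0) := by
  classical
  have cz : ∀ i < 8, (0 : F) ∉ cycClass α 8 i := by
    intro i hi h2
    rw [h.mem8 hi] at h2
    exact h.nz h2 rfl
  have cc : ∀ i < 8, (cycClass α 8 i).card = f := by
    intro i hi
    rw [← h.card_class (ζ ^ i) (by rw [← pow_mul, mul_comm, pow_mul, h.z8, one_pow])]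
    congr 1
    ext u
    simp [h.mem8 hi]
  have cd : ∀ i < 8, ∀ j < 8, i ≠ j → Disjoint (cycClass α 8 i) (cycClass α 8 j) := by
    intro i hi j hj hij
    rw [Finset.disjoint_left]
    intro u hu hv
    rw [h.mem8 hi] at hu
    rw [h.mem8 hj] at hv
    exact hij (h.prim.pow_inj hi hj (hu.symm.trans hv))
  refine ⟨rfl, by simp, ?_, ?_, ?_, ?_⟩
  · intro i; fin_cases i
    · exact cz 0 (by norm_num)
    · exact cz 1 (by norm_num)
    · exact cz 4 (by norm_num)
    · exact cz 6 (by norm_num)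
  · intro i; fin_cases i
    · exact cc 0 (by norm_num)
    · exact cc 1 (by norm_num)
    · exact cc 4 (by norm_num)
    · exact cc 6 (by norm_num)
  · have key : ∀ i j : Fin 4, i ≠ j → Disjoint (cycClass α 8 ((![0, 1, 4, 6] : Fin 4 → ℕ) i))
        (cycClass α 8 ((![0, 1, 4, 6] : Fin 4 → ℕ) j)) := by
      intro i j hij
      apply cd
      · fin_cases i <;> simp
      · fin_cases j <;> simp
      · revert hij; revert i j; decide
    have e : (![cycClass α 8 0, cycClass α 8 1, cycClass α 8 4, cycClass α 8 6]
        : Fin 4 → Finset F) = fun i => cycClass α 8 ((![0, 1, 4, 6] : Fin 4 → ℕ) i) := by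
      ext i; fin_cases i <;> rfl
    intro i j hij
    rw [e]; exact key i j hij
  · ext d
    rw [Fin.sum_univ_four]
    simp only [Multiset.count_add, Multiset.count_nsmul]
    change Multiset.count d (intDiff (cycClass α 8 0)) + Multiset.count d (intDiff (cycClass α 8 1))
      + Multiset.count d (intDiff (cycClass α 8 4)) + Multiset.count d (intDiff (cycClass α 8 6)) = _
    rw [Multiset.count_eq_of_nodup (cycClass α 2 0).nodup,
      Multiset.count_eq_of_nodup (Gstar F \ cycClass α 2 0).nodup]
    simp only [Finset.mem_val, Finset.mem_sdiff, h.mem2, Gstar, Finset.mem_erase,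
      Finset.mem_univ, and_true]
    by_cases hd : d = 0
    · subst hd
      simp [count_zero, MulChar.map_zero χ]
    · rw [h.count_intDiff (by norm_num) hd, h.count_intDiff (by norm_num) hd,
        h.count_intDiff (by norm_num) hd, h.count_intDiff (by norm_num) hd]
      have z4 : ∀ i, (χ d * (ζ ^ i)⁻¹) ^ 4 = χ d ^ 4 * ((-1) ^ i)⁻¹ := by
        intro i
        rw [mul_pow, inv_pow, ← pow_mul, mul_comm i 4, pow_mul, h.hζ]
      by_cases h4 : χ d ^ 4 = 1
      · rw [h0 _ (by rw [z4, h4]; norm_num), h1 _ (by rw [z4, h4]; norm_num),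
          h0 _ (by rw [z4, h4]; norm_num), h0 _ (by rw [z4, h4]; norm_num)]
        simp [h4, hd]; ring
      · have h4' : χ d ^ 4 = -1 := by
          have h8 := h.pow8 hd
          have : (χ d ^ 4 - 1) * (χ d ^ 4 + 1) = 0 := by linear_combination h8
          rcases mul_eq_zero.1 this with h5 | h5
          · exact absurd (sub_eq_zero.1 h5) h4
          · exact eq_neg_of_add_eq_zero_left h5
        rw [h1 _ (by rw [z4, h4']; norm_num), h0 _ (by rw [z4, h4']; norm_num),
          h1 _ (by rw [z4, h4']; norm_num), h1 _ (by rw [z4, h4']; norm_num)]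
        simp [h4, hd]; ring

/-- Collapse of the cyclotomic numbers to two values. -/
lemma collapse (h : Oct χ ζ α f) (n0 n1 : ℕ)
    (a0 : N χ (ζ ^ 0) = n0) (a1 : N χ (ζ ^ 1) = n1) (a2 : N χ (ζ ^ 2) = n0)
    (a3 : N χ (ζ ^ 3) = n1) (a4 : N χ (ζ ^ 4) = n0) (a5 : N χ (ζ ^ 5) = n1)
    (a6 : N χ (ζ ^ 6) = n0) (a7 : N χ (ζ ^ 7) = n1) :
    (∀ w : ℂ, w ^ 4 = 1 → N χ w = n0) ∧ (∀ w : ℂ, w ^ 4 = -1 → N χ w = n1) := by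
  have key : ∀ k, (ζ ^ k) ^ 4 = (-1) ^ k := by
    intro k; rw [← pow_mul, mul_comm, pow_mul, h.hζ]
  constructor
  · intro w hw
    obtain ⟨k, hk, rfl⟩ := h.prim.eq_pow_of_pow_eq_one
      (show w ^ 8 = 1 by linear_combination (w ^ 4 + 1) * hw)
    rw [key] at hw
    interval_cases k <;> first | assumption | (norm_num at hw)
  · intro w hw
    obtain ⟨k, hk, rfl⟩ := h.prim.eq_pow_of_pow_eq_one
      (show w ^ 8 = 1 by linear_combination (w ^ 4 - 1) * hw)
    rw [key] at hw
    interval_cases k <;> first | assumption | (norm_num at hw)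

end

end Oct
/-- Existence of the normalised octic character. -/
lemma exists_oct {F : Type*} [Field F] [Fintype F] [DecidableEq F] (α : F) (hα : IsPrimitiveElt α)
    (f : ℕ) (hcard : Fintype.card F = 8 * f + 1) (hf : f % 2 = 1) :
    ∃ (χ : MulChar F ℂ) (ζ : ℂ), Oct χ ζ α f := by
  classical
  have hprim := Complex.isPrimitiveRoot_exp 8 (by norm_num)
  set ζ : ℂ := Complex.exp (2 * Real.pi * Complex.I / (8 : ℕ)) with hζdef
  have h8 : ζ ^ 8 = 1 := hprim.pow_eq_one
  have h4 : ζ ^ 4 = -1 := by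
    have h1 : (ζ ^ 4 - 1) * (ζ ^ 4 + 1) = 0 := by linear_combination h8
    rcases mul_eq_zero.1 h1 with h2 | h2
    · exact absurd (sub_eq_zero.1 h2) (hprim.pow_ne_one_of_pos_of_lt (by norm_num) (by norm_num))
    · exact eq_neg_of_add_eq_zero_left h2
  have α0 : α ≠ 0 := by
    rintro rfl
    have hlt : 2 < (Finset.univ : Finset F).card := by rw [Finset.card_univ, hcard]; omega
    obtain ⟨a, b, c, _, _, _, hab, hac, hbc⟩ := Finset.two_lt_card_iff.1 hlt
    have key : ∀ t : F, t = 0 ∨ t = 1 := by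
      intro t
      by_cases ht : t = 0
      · exact Or.inl ht
      · obtain ⟨n, hn⟩ := hα t ht
        rcases Nat.eq_zero_or_pos n with h0 | h0
        · right; rw [← hn, h0, pow_zero]
        · left; rw [← hn, zero_pow (by omega)]
    rcases key a with rfl | rfl <;> rcases key b with rfl | rfl <;> rcases key c with rfl | rfl <;>
      simp_all
  let g : Fˣ := Units.mk0 α α0
  have hg : ∀ x : Fˣ, x ∈ Subgroup.zpowers g := by
    intro x
    obtain ⟨n, hn⟩ := hα x x.ne_zero
    refine ⟨(n : ℤ), ?_⟩
    apply Units.ext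
    simpa [g] using hn
  have ζ0 : ζ ≠ 0 := Complex.exp_ne_zero _
  have hroot : Units.mk0 ζ ζ0 ∈ rootsOfUnity (Fintype.card Fˣ) ℂ := by
    rw [mem_rootsOfUnity, Fintype.card_units, hcard]
    apply Units.ext
    rw [Nat.add_sub_cancel, pow_mul]
    simp [h8]
  refine ⟨MulChar.ofRootOfUnity hroot hg, ζ, h4, hα, ?_, hcard, hf⟩
  exact MulChar.ofRootOfUnity_spec hroot hg

/-- Representation of primes `≡ 9 (mod 16)` by `u² + 2v²`. -/
lemma prime_rep (p : ℕ) (hp : p.Prime) (h16 : p % 16 = 9) :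
    ∃ u v : ℤ, (p : ℤ) = u ^ 2 + 2 * v ^ 2 := by
  haveI := Fact.mk hp
  obtain ⟨g, hg⟩ := IsCyclic.exists_generator (α := (ZMod p)ˣ)
  have hα : IsPrimitiveElt (g : ZMod p) := by
    intro x hx
    obtain ⟨n, hn⟩ := (Submonoid.mem_powers_iff _ _).1
      ((mem_powers_iff_mem_zpowers).2 (hg (Units.mk0 x hx)))
    refine ⟨n, ?_⟩
    have := congrArg Units.val hn
    simpa using this
  obtain ⟨χ, ζ, h⟩ := exists_oct (g : ZMod p) hα (p / 8) (by rw [ZMod.card]; omega) (by omega)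
  obtain ⟨A, B, X, Y, _, h1, _, _⟩ := h.jac
  refine ⟨A, B, ?_⟩
  rw [h1, ZMod.card]

lemma base_mod (p n : ℕ) (h : p ^ (2 * n + 1) % 16 = 9) : p % 16 = 9 := by
  have hodd : p % 2 = 1 := by
    by_contra h1
    have h2 : 2 ∣ p ^ (2 * n + 1) := (Nat.dvd_of_mod_eq_zero (by omega)).trans (dvd_pow_self p (by omega))
    omega
  have h8 : p ^ 2 % 8 = 1 := by
    have : p % 8 = 1 ∨ p % 8 = 3 ∨ p % 8 = 5 ∨ p % 8 = 7 := by omega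
    rcases this with h | h | h | h <;> rw [Nat.pow_mod, h]
  have h8n : (p ^ 2) ^ n % 8 = 1 := by rw [Nat.pow_mod, h8, one_pow]; rfl
  have h1 : p ^ (2 * n + 1) % 8 = p % 8 := by
    rw [pow_succ, pow_mul, Nat.mul_mod, h8n, one_mul, Nat.mod_mod]
  have h2 : p % 16 ≠ 1 := by
    intro h3
    rw [Nat.pow_mod, h3, one_pow] at h
    omega
  omega

lemma x_nine (x y : ℤ) (hxy : (9 : ℤ) = x ^ 2 + 4 * y ^ 2) (hx4 : x % 4 = 1) : x = -3 := by
  have hx2 : x ^ 2 ≤ 9 := by nlinarith [sq_nonneg y]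
  have b1 : x ≤ 3 := by nlinarith
  have b2 : -3 ≤ x := by nlinarith
  have : x = -3 ∨ x = 1 := by omega
  rcases this with h | h
  · exact h
  · exfalso
    rw [h] at hxy
    have hy : y ^ 2 = 2 := by linarith
    have c1 : y ≤ 1 := by nlinarith
    have c2 : -1 ≤ y := by nlinarith
    interval_cases y <;> omega

/-- Let `q = p^m ≡ 9 (mod 16)` be a prime power in which `2` is a quartic
residue, and let `x, y, a, b` be the integers with `q = x² + 4y²`, `x ≡ 1 (mod 4)`, and
`q = a² + 2b²`, `a ≡ 1 (mod 4)`, with `a = 1`.  Then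
`D = {C_0^8, C_1^8, C_4^8, C_6^8}` is a
`(q,4,(q-1)/8;(q-12-x)/16,(q-6+x)/16)`-DPDF relative to `C_0^2`. -/
theorem stmt_14 {F : Type*} [Field F] [Fintype F] [DecidableEq F]
    (q p m : ℕ) (hp : p.Prime) (hq : Fintype.card F = q) (hqpm : q = p ^ m)
    (hq16 : q % 16 = 9)
    (α : F) (hα : IsPrimitiveElt α)
    (h2 : (2 : F) ∈ cycClass α 4 0)
    (x y a b : ℤ) (hxy : (q : ℤ) = x ^ 2 + 4 * y ^ 2) (hx4 : x % 4 = 1)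
    (hab : (q : ℤ) = a ^ 2 + 2 * b ^ 2) (ha4 : a % 4 = 1) (ha : a = 1) :
    ∃ lam mu : ℕ,
      16 * (lam : ℤ) = (q : ℤ) - 12 - x ∧
      16 * (mu : ℤ) = (q : ℤ) - 6 + x ∧
      IsDPDF ![cycClass α 8 0, cycClass α 8 1, cycClass α 8 4, cycClass α 8 6]
        q 4 (fun _ => (q - 1) / 8) (cycClass α 2 0) lam mu := by
  classical
  set f := q / 8 with hfdef
  have hcard : Fintype.card F = 8 * f + 1 := by rw [hq]; omega
  have hfo : f % 2 = 1 := by omega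
  obtain ⟨χ, ζ, h⟩ := exists_oct α hα f hcard hfo
  obtain ⟨A, B, X, Y, hA, hAB, hXY, he⟩ := h.jac
  rw [hq] at hAB hXY
  obtain ⟨r5, r4, r6, r7, hf1, he1, h13, h02⟩ := h.rels (h.chi_two h2) A hA
  rw [ha] at hab
  have main : ∀ n0 n1 : ℕ, Oct.N χ (ζ ^ 0) = n0 → Oct.N χ (ζ ^ 2) = n0 → Oct.N χ (ζ ^ 1) = n1 →
      16 * ((3 * n0 + n1 : ℕ) : ℤ) = (q : ℤ) - 12 - x →
      16 * ((3 * n1 + n0 : ℕ) : ℤ) = (q : ℤ) - 6 + x →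
      ∃ lam mu : ℕ,
      16 * (lam : ℤ) = (q : ℤ) - 12 - x ∧
      16 * (mu : ℤ) = (q : ℤ) - 6 + x ∧
      IsDPDF ![cycClass α 8 0, cycClass α 8 1, cycClass α 8 4, cycClass α 8 6]
        q 4 (fun _ => (q - 1) / 8) (cycClass α 2 0) lam mu := by
    intro n0 n1 a0 a2 a1 hl hm
    refine ⟨_, _, hl, hm, ?_⟩
    have hc := h.collapse n0 n1 a0 a1 a2 (by rw [← h13, a1]) (by rw [r4, a0]) (by rw [r5, a1])
      (by rw [r6, a2]) (by rw [r7, ← h13, a1])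
    have hD := h.isDPDF n0 n1 hc.1 hc.2
    rw [hq] at hD
    have hf8 : (q - 1) / 8 = f := by omega
    rw [hf8]
    exact hD
  rcases Nat.even_or_odd' m with ⟨k, hk | hk⟩
  · -- even exponent: `q = 9`
    have hq2 : q = (p ^ k) ^ 2 := by rw [hqpm, hk, mul_comm, pow_mul]
    have h3 : p ^ k = 3 := by
      refine even_power_case p k hp b.natAbs (by rw [← hq2]; exact hq16) ?_
      have : (((p ^ k) ^ 2 : ℕ) : ℤ) = ((1 + 2 * b.natAbs ^ 2 : ℕ) : ℤ) := by
        rw [← hq2]; push_cast; rw [sq_abs, hab]; ring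
      exact_mod_cast this
    have hq9 : q = 9 := by rw [hq2, h3]; norm_num
    have hf1' : f = 1 := by omega
    have hx : x = -3 := by
      rw [hq9] at hxy; push_cast at hxy; exact x_nine x y hxy hx4
    rw [hf1'] at hf1
    push_cast at hf1
    refine main 0 0 (by omega) (by omega) (by omega) ?_ ?_
    · rw [hq9, hx]; norm_num
    · rw [hq9, hx]; norm_num
  · -- odd exponent: `q = p`
    have hp16 : p % 16 = 9 := base_mod p k (by rw [← hk, ← hqpm]; exact hq16)
    obtain ⟨u, v, huv⟩ := prime_rep p hp hp16
    have hk0 : k = 0 := odd_power_case p k hp hp16 u v b huv (by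
      have h5 : (q : ℤ) = (p : ℤ) ^ (2 * k + 1) := by rw [hqpm, hk]; push_cast; ring
      rw [← h5, hab]; ring)
    have hqp : q = p := by rw [hqpm, hk, hk0]; simp
    have np2 : ¬ (p : ℤ) ∣ 2 := by
      intro h6
      have := Int.le_of_dvd (by norm_num) h6
      omega
    have np4 : ¬ (p : ℤ) ∣ 4 := by
      intro h6
      have := Int.le_of_dvd (by norm_num) h6
      omega
    have A2 : A ^ 2 = 1 ^ 2 := rep_unique_prime p hp 2 A B 1 b (by norm_num) np2 np2
      (by rw [hAB, hqp]) (by rw [← hqp, hab])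
    have X2 : X ^ 2 = x ^ 2 := rep_unique_prime p hp 4 X Y x y (by norm_num) np4 np2
      (by rw [hXY, hqp]) (by rw [← hqp, hxy])
    have A1 : A = -1 := by
      rcases sq_eq_sq_iff_eq_or_eq_neg.1 A2 with h7 | h7
      · omega
      · exact h7
    have X1 : X = -x := by
      rcases sq_eq_sq_iff_eq_or_eq_neg.1 X2 with h7 | h7
      · omega
      · exact h7
    refine main (Oct.N χ (ζ ^ 0)) (Oct.N χ (ζ ^ 1)) rfl (by omega) rfl ?_ ?_
    · push_cast; omega
    · push_cast; omega
end

section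
/- Let q = p^m ≡ 1 (mod 16) be a prime power (i.e., q = 8f+1 with f even) in which 2 is NOT a quartic residue (2 ∉ C_0^4). Let a be the integer with q = a² + 2b² (b ∈ ℤ), a ≡ 1 (mod 4), and suppose a = −3. Then there exists an integer y with q = x² + 4y² (x ≡ 1 mod 4) such that D = {C_0^8, C_1^8, C_4^8, C_5^8} satisfies Σ_{i≠j} Δ(D_i,D_j) = ((3q−3+8y)/16)·C_0^2 + ((3q−3−8y)/16)·C_1^2 as multisets; in particular, D is a (q,4,(q−1)/8;(3q−3+8y)/16,(3q−3−8y)/16)-EPDF relative to C_0^2 if y ≠ 0, and a (q,4,(q−1)/8,(3q−3)/16)-EDF if y = 0. -/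
open Finset

section Basics
set_option linter.unusedSectionVars false
variable {F : Type*} [Field F] [Fintype F] [DecidableEq F]

theorem prim_ne_zero {α : F} (hα : IsPrimitiveElt α) (h3 : 2 < Fintype.card F) : α ≠ 0 := by
  rintro rfl
  have : (Finset.univ : Finset F) ⊆ {0, 1} := by
    intro x _
    by_cases hx : x = 0
    · simp [hx]
    · obtain ⟨n, hn⟩ := hα x hx
      rcases Nat.eq_zero_or_pos n with h | h
      · subst h; simp at hn; simp [← hn]
      · rw [zero_pow h.ne'] at hn; exact absurd hn.symm hx
  have h2 := Finset.card_le_card this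
  rw [Finset.card_univ] at h2
  have := Finset.card_le_two (a := (0:F)) (b := 1)
  omega

theorem prim_zpowers {α : F} (hα : IsPrimitiveElt α) (h0 : α ≠ 0) :
    ∀ x, x ∈ Subgroup.zpowers (Units.mk0 α h0) := by
  intro x
  obtain ⟨n, hn⟩ := hα x x.ne_zero
  refine ⟨n, ?_⟩
  ext
  simp [hn]

theorem prim_order {α : F} (hα : IsPrimitiveElt α) (h0 : α ≠ 0) :
    orderOf α = Fintype.card F - 1 := by
  have := orderOf_eq_card_of_forall_mem_zpowers (prim_zpowers hα h0)
  rw [Nat.card_eq_fintype_card, Fintype.card_units] at this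
  rw [← this, ← orderOf_units]; rfl

theorem prim_pow_eq {α : F} (hα : IsPrimitiveElt α) (h0 : α ≠ 0) (n m : ℕ) :
    α ^ n = α ^ m ↔ n ≡ m [MOD (Fintype.card F - 1)] := by
  rw [← prim_order hα h0]
  have := pow_eq_pow_iff_modEq (x := Units.mk0 α h0) (n := n) (m := m)
  have ho : orderOf (Units.mk0 α h0) = orderOf α := by
    rw [← orderOf_units]; rfl
  rw [ho] at this
  rw [← this, Units.ext_iff]
  simp

theorem mem_cyc {α : F} (hα : IsPrimitiveElt α) (h0 : α ≠ 0) {e k : ℕ} (hk : k < e)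
    (he : e ∣ Fintype.card F - 1) (x : F) :
    x ∈ cycClass α e k ↔ ∃ n, α ^ n = x ∧ n % e = k := by
  unfold cycClass
  rw [Finset.mem_image]
  have hc : 0 < Fintype.card F - 1 := by
    have := Fintype.one_lt_card (α := F); omega
  constructor
  · rintro ⟨j, _, hj⟩
    exact ⟨_, hj, by rw [Nat.mul_add_mod, Nat.mod_eq_of_lt hk]⟩
  · rintro ⟨n, hn, hne⟩
    have h1 : (n % (Fintype.card F - 1)) % e = k := by rw [Nat.mod_mod_of_dvd _ he, hne]
    have h2 : n % (Fintype.card F - 1) < Fintype.card F - 1 := Nat.mod_lt _ hc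
    refine ⟨(n % (Fintype.card F - 1)) / e, ?_, ?_⟩
    · rw [Finset.mem_range]
      exact lt_of_le_of_lt (Nat.div_le_self _ _) (by omega)
    · have := Nat.div_add_mod (n % (Fintype.card F - 1)) e
      rw [h1] at this
      rw [this, ← hn, prim_pow_eq hα h0]
      exact Nat.mod_modEq _ _

theorem pow_mem_cyc {α : F} (hα : IsPrimitiveElt α) (h0 : α ≠ 0) {e k : ℕ} (hk : k < e)
    (he : e ∣ Fintype.card F - 1) (n : ℕ) :
    α ^ n ∈ cycClass α e k ↔ n % e = k := by
  rw [mem_cyc hα h0 hk he]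
  constructor
  · rintro ⟨m, hm, hme⟩
    rw [prim_pow_eq hα h0] at hm
    rw [← hme]
    exact (Nat.ModEq.of_dvd he hm).symm
  · intro h; exact ⟨n, rfl, h⟩

theorem cyc_ne_zero {α : F} (h0 : α ≠ 0) {e k : ℕ} {x : F} (hx : x ∈ cycClass α e k) : x ≠ 0 := by
  unfold cycClass at hx
  rw [Finset.mem_image] at hx
  obtain ⟨j, _, rfl⟩ := hx
  exact pow_ne_zero _ h0

/-- sum over the field split by classes -/
theorem sum_cyc {M : Type*} [AddCommMonoid M] {α : F} (hα : IsPrimitiveElt α) (h0 : α ≠ 0) {e : ℕ}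
    (he0 : 0 < e) (he : e ∣ Fintype.card F - 1) (g : F → M) :
    ∑ x, g x = g 0 + ∑ k ∈ Finset.range e, ∑ x ∈ cycClass α e k, g x := by
  have hd : Set.PairwiseDisjoint (↑(Finset.range e)) (cycClass α e) := by
    intro i hi j hj hij
    rw [Function.onFun, Finset.disjoint_left]
    intro x hx hx'
    simp only [Finset.coe_range, Set.mem_Iio] at hi hj
    obtain ⟨n, rfl, hn⟩ := (mem_cyc hα h0 hi he x).1 hx
    rw [pow_mem_cyc hα h0 hj he] at hx'
    omega
  rw [← Finset.sum_biUnion hd, ← Finset.add_sum_erase _ _ (Finset.mem_univ (0:F))]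
  congr 1
  apply Finset.sum_congr _ (fun _ _ => rfl)
  ext x
  simp only [Finset.mem_erase, Finset.mem_univ, and_true, Finset.mem_biUnion, Finset.mem_range]
  constructor
  · intro hx
    obtain ⟨n, rfl⟩ := hα x hx
    exact ⟨n % e, Nat.mod_lt _ he0, (pow_mem_cyc hα h0 (Nat.mod_lt _ he0) he n).2 rfl⟩
  · rintro ⟨k, _, hk⟩
    exact cyc_ne_zero h0 hk

/-- multiplication by an element of a class permutes classes -/
theorem image_mul_cyc {α : F} (hα : IsPrimitiveElt α) (h0 : α ≠ 0) {e : ℕ}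
    (he : e ∣ Fintype.card F - 1) (n : ℕ) {k l : ℕ} (hk : k < e) (hl : l < e)
    (h : (n + k) % e = l) :
    (cycClass α e k).image (fun x => α ^ n * x) = cycClass α e l := by
  ext x
  rw [Finset.mem_image]
  constructor
  · rintro ⟨y, hy, rfl⟩
    obtain ⟨m, rfl, hm⟩ := (mem_cyc hα h0 hk he y).1 hy
    rw [← pow_add, pow_mem_cyc hα h0 hl he, ← h, ← hm]
    simp
  · intro hx
    refine ⟨(α ^ n)⁻¹ * x, ?_, by field_simp⟩
    have hx0 := cyc_ne_zero h0 hx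
    obtain ⟨m, hm⟩ := hα ((α ^ n)⁻¹ * x) (mul_ne_zero (inv_ne_zero (pow_ne_zero _ h0)) hx0)
    rw [← hm, pow_mem_cyc hα h0 hk he]
    have : x = α ^ (n + m) := by rw [pow_add, hm]; field_simp
    rw [this, pow_mem_cyc hα h0 hl he, ← h] at hx
    have h3 : n + m ≡ n + k [MOD e] := hx
    have := Nat.ModEq.add_left_cancel' n h3
    rw [Nat.ModEq, Nat.mod_eq_of_lt hk] at this
    exact this

theorem sum_mul_cyc {M : Type*} [AddCommMonoid M] {α : F} (hα : IsPrimitiveElt α) (h0 : α ≠ 0)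
    {e : ℕ} (he : e ∣ Fintype.card F - 1) (n : ℕ) {k l : ℕ} (hk : k < e) (hl : l < e)
    (h : (n + k) % e = l) (g : F → M) :
    ∑ x ∈ cycClass α e l, g x = ∑ x ∈ cycClass α e k, g (α ^ n * x) := by
  rw [← image_mul_cyc hα h0 he n hk hl h, Finset.sum_image]
  intro x _ y _ hxy
  exact mul_left_cancel₀ (pow_ne_zero _ h0) hxy

theorem card_cyc {α : F} (hα : IsPrimitiveElt α) (h0 : α ≠ 0) {e k : ℕ} (hk : k < e)
    (he : e ∣ Fintype.card F - 1) : (cycClass α e k).card = (Fintype.card F - 1) / e := by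
  have h1 := sum_cyc hα h0 (by omega : 0 < e) he (fun _ => 1)
  have h2 : ∀ l ∈ Finset.range e, ∑ x ∈ cycClass α e l, 1 = (cycClass α e k).card := by
    intro l hl
    rw [Finset.mem_range] at hl
    rw [sum_mul_cyc hα h0 he (l + (e - k)) hk hl _ (fun _ => 1)]
    · simp
    · rw [show l + (e - k) + k = l + e by omega]; simp [Nat.mod_eq_of_lt hl]
  rw [Finset.sum_congr rfl h2] at h1
  simp at h1
  rw [h1]
  simp
  rw [Nat.mul_div_cancel_left _ (by omega)]

theorem card_mul_cyc {α : F} (hα : IsPrimitiveElt α) (h0 : α ≠ 0) {e k : ℕ} (hk : k < e)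
    (he : e ∣ Fintype.card F - 1) : e * (cycClass α e k).card = Fintype.card F - 1 := by
  rw [card_cyc hα h0 hk he, Nat.mul_div_cancel' he]

theorem cyc_disjoint {α : F} (hα : IsPrimitiveElt α) (h0 : α ≠ 0) {e k l : ℕ} (hk : k < e)
    (hl : l < e) (hkl : k ≠ l)
    (he : e ∣ Fintype.card F - 1) : Disjoint (cycClass α e k) (cycClass α e l) := by
  rw [Finset.disjoint_left]
  intro x hx hx'
  obtain ⟨n, rfl, hn⟩ := (mem_cyc hα h0 hk he x).1 hx
  rw [pow_mem_cyc hα h0 hl he] at hx'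
  omega

/-- `C_k^4 = C_k^8 ∪ C_{k+4}^8` -/
theorem sum_cyc4 {M : Type*} [AddCommMonoid M] {α : F} (hα : IsPrimitiveElt α) (h0 : α ≠ 0)
    (he : 8 ∣ Fintype.card F - 1) {k : ℕ} (hk : k < 4) (g : F → M) :
    ∑ x ∈ cycClass α 4 k, g x = ∑ x ∈ cycClass α 8 k, g x + ∑ x ∈ cycClass α 8 (k + 4), g x := by
  rw [← Finset.sum_union (cyc_disjoint hα h0 (by omega) (by omega) (by omega) he)]
  apply Finset.sum_congr _ (fun _ _ => rfl)
  ext x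
  have he4 : 4 ∣ Fintype.card F - 1 := Dvd.dvd.trans (by norm_num) he
  rw [Finset.mem_union]
  by_cases hx : x = 0
  · subst hx
    constructor
    · intro h; exact absurd rfl (cyc_ne_zero h0 h)
    · rintro (h | h) <;> exact absurd rfl (cyc_ne_zero h0 h)
  · obtain ⟨n, rfl⟩ := hα x hx
    rw [pow_mem_cyc hα h0 (by omega) he, pow_mem_cyc hα h0 (by omega) he,
      pow_mem_cyc hα h0 (by omega) he4]
    omega

end Basics
section Chars
set_option linter.unusedSectionVars false
variable {F : Type*} [Field F] [Fintype F] [DecidableEq F]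

theorem exists_theta {α : F} (hα : IsPrimitiveElt α) (h0 : α ≠ 0)
    (he : 8 ∣ Fintype.card F - 1) :
    ∃ (ζ : ℂ) (θ : MulChar F ℂ), ζ ^ 4 = -1 ∧ θ α = ζ := by
  obtain ⟨ζ, hζ⟩ := IsAlgClosed.exists_pow_nat_eq (-1 : ℂ) (n := 4) (by norm_num)
  have hz0 : ζ ≠ 0 := by rintro rfl; norm_num at hζ
  have hmem : Units.mk0 ζ hz0 ∈ rootsOfUnity (Fintype.card Fˣ) ℂ := by
    rw [mem_rootsOfUnity, Fintype.card_units]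
    obtain ⟨c, hc⟩ := he
    rw [hc]
    ext
    simp only [Units.val_pow_eq_pow_val, Units.val_mk0, Units.val_one]
    rw [show 8 * c = 4 * (2 * c) by ring, pow_mul, hζ, pow_mul]; simp
  refine ⟨ζ, MulChar.ofRootOfUnity hmem (prim_zpowers hα h0), hζ, ?_⟩
  exact MulChar.ofRootOfUnity_spec hmem (prim_zpowers hα h0)

theorem zeta8 {ζ : ℂ} (hζ : ζ ^ 4 = -1) : ζ ^ 8 = 1 := by
  rw [show 8 = 4 * 2 by norm_num, pow_mul, hζ]; norm_num

theorem zeta_ne {ζ : ℂ} (hζ : ζ ^ 4 = -1) (u : ℕ) (hu : u % 8 ≠ 0) : ζ ^ u ≠ 1 := by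
  intro h
  have h8 := zeta8 hζ
  rw [← Nat.div_add_mod u 8, pow_add, pow_mul, h8, one_pow, one_mul] at h
  have hlt : u % 8 < 8 := Nat.mod_lt _ (by norm_num)
  have key : ∀ r : ℕ, r < 8 → r ≠ 0 → ζ ^ r ≠ 1 := by
    intro r hr hr0 h
    have h4 : ζ ^ 4 = 1 := by
      have hz0 : ζ ≠ 0 := by rintro rfl; norm_num at hζ
      have e1 : (ζ ^ r) ^ 4 = 1 := by rw [h]; norm_num
      have e2 : (ζ ^ r) ^ 2 = 1 := by rw [h]; norm_num
      have e3 : (ζ ^ 4) ^ r = 1 := by rw [← pow_mul, mul_comm, pow_mul]; exact e1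
      interval_cases r
      · exact absurd rfl hr0
      · linear_combination e1
      · linear_combination e2
      · rw [hζ] at e3; norm_num at e3
      · exact h
      · rw [hζ] at e3; norm_num at e3
      · linear_combination e2 - (ζ ^ 4) * h8
      · rw [hζ] at e3; norm_num at e3
    rw [hζ] at h4; norm_num at h4
  exact key _ hlt hu h

theorem theta_pow_apply {α : F} {ζ : ℂ} {θ : MulChar F ℂ} (hθ : θ α = ζ) (u n : ℕ) (h0 : α ≠ 0) :
    (θ ^ u) (α ^ n) = ζ ^ (u * n) := by
  have : IsUnit α := isUnit_iff_ne_zero.2 h0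
  have h := MulChar.pow_apply_coe θ u (Units.mk0 α h0)
  rw [Units.val_mk0] at h
  rw [map_pow, h, hθ, pow_mul]

theorem theta_cyc {α : F} (hα : IsPrimitiveElt α) (h0 : α ≠ 0)
    (he : 8 ∣ Fintype.card F - 1) {ζ : ℂ} {θ : MulChar F ℂ} (hζ : ζ ^ 4 = -1) (hθ : θ α = ζ)
    (u k : ℕ) (hk : k < 8) {x : F} (hx : x ∈ cycClass α 8 k) : (θ ^ u) x = ζ ^ (u * k) := by
  obtain ⟨n, rfl, hn⟩ := (mem_cyc hα h0 hk he x).1 hx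
  rw [theta_pow_apply hθ _ _ h0]
  rw [← Nat.div_add_mod n 8, hn, mul_add, pow_add, show u * (8 * (n / 8)) = 8 * (u * (n/8)) by ring,
    pow_mul, zeta8 hζ]; simp

theorem theta_ne_one {α : F} (h0 : α ≠ 0)
    {ζ : ℂ} {θ : MulChar F ℂ} (hζ : ζ ^ 4 = -1) (hθ : θ α = ζ)
    (u : ℕ) (hu : u % 8 ≠ 0) : θ ^ u ≠ 1 := by
  intro h
  have := theta_pow_apply hθ u 1 h0
  rw [h, pow_one, mul_one, MulChar.one_apply (isUnit_iff_ne_zero.2 h0)] at this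
  exact zeta_ne hζ u hu this.symm

theorem theta8 {α : F} (hα : IsPrimitiveElt α) (h0 : α ≠ 0)
    {ζ : ℂ} {θ : MulChar F ℂ} (hζ : ζ ^ 4 = -1) (hθ : θ α = ζ) : θ ^ 8 = 1 := by
  rw [MulChar.eq_iff (prim_zpowers hα h0), Units.val_mk0,
    MulChar.one_apply (isUnit_iff_ne_zero.2 h0)]
  have := theta_pow_apply hθ 8 1 h0
  rw [pow_one, mul_one, zeta8 hζ] at this
  exact this

theorem prim_half {α : F} (hα : IsPrimitiveElt α) (h0 : α ≠ 0) {f : ℕ}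
    (hf : Fintype.card F - 1 = 2 * f) : α ^ f = -1 := by
  have hc := Fintype.one_lt_card (α := F)
  have h1 : α ^ (2 * f) = 1 := by
    rw [← hf]; exact FiniteField.pow_card_sub_one_eq_one α h0
  have h2 : (α ^ f - 1) * (α ^ f + 1) = 0 := by
    rw [pow_mul'] at h1
    linear_combination h1
  rcases mul_eq_zero.1 h2 with h | h
  · exfalso
    have h3 : α ^ f = α ^ 0 := by rw [pow_zero]; exact sub_eq_zero.1 h
    rw [prim_pow_eq hα h0, hf] at h3
    have h4 := (Nat.modEq_zero_iff_dvd).1 h3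
    have := Nat.le_of_dvd (by omega) h4
    omega
  · linear_combination h

theorem theta_neg_one {α : F} (hα : IsPrimitiveElt α) (h0 : α ≠ 0) {f : ℕ}
    (hf : Fintype.card F - 1 = 16 * f) 
    {ζ : ℂ} {θ : MulChar F ℂ} (hζ : ζ ^ 4 = -1) (hθ : θ α = ζ) (u : ℕ) : (θ ^ u) (-1) = 1 := by
  rw [← prim_half hα h0 (f := 8 * f) (by rw [hf]; ring), theta_pow_apply hθ _ _ h0,
    show u * (8 * f) = 8 * (u * f) by ring, pow_mul, zeta8 hζ, one_pow]

theorem jac_expand {α : F} (hα : IsPrimitiveElt α) (h0 : α ≠ 0)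
    (he : 8 ∣ Fintype.card F - 1) {ζ : ℂ} {θ : MulChar F ℂ} (hζ : ζ ^ 4 = -1) (hθ : θ α = ζ)
    (u : ℕ) (φ : MulChar F ℂ) :
    jacobiSum (θ ^ u) φ = ∑ k ∈ Finset.range 8, ζ ^ (u * k) * ∑ x ∈ cycClass α 8 k, φ (1 - x) := by
  rw [jacobiSum, sum_cyc hα h0 (by norm_num) he, MulChar.map_nonunit _ (by simp), zero_mul,
    zero_add]
  apply Finset.sum_congr rfl
  intro k hk
  rw [Finset.mul_sum]
  apply Finset.sum_congr rfl
  intro x hx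
  rw [theta_cyc hα h0 he hζ hθ u k (Finset.mem_range.1 hk) hx]

theorem quad_alpha {α : F} (hα : IsPrimitiveElt α) (h0 : α ≠ 0) {f : ℕ} (hf0 : f ≠ 0)
    (hf : Fintype.card F - 1 = 2 * f) : quadraticChar F α = -1 := by
  rw [quadraticChar_neg_one_iff_not_isSquare]
  rintro ⟨r, hr⟩
  have hr0 : r ≠ 0 := by rintro rfl; simp at hr; exact h0 hr
  obtain ⟨n, rfl⟩ := hα r hr0
  have : α ^ 1 = α ^ (n + n) := by rw [pow_add, ← hr, pow_one]
  rw [prim_pow_eq hα h0, hf] at this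
  have := Nat.ModEq.of_dvd (Dvd.intro f rfl : 2 ∣ 2 * f) this
  unfold Nat.ModEq at this
  omega

theorem quad_eq {α : F} (hα : IsPrimitiveElt α) (h0 : α ≠ 0) {f : ℕ} (hf0 : f ≠ 0)
    (hf : Fintype.card F - 1 = 2 * f)
    {ζ : ℂ} {θ : MulChar F ℂ} (hζ : ζ ^ 4 = -1) (hθ : θ α = ζ) :
    (quadraticChar F).ringHomComp (Int.castRingHom ℂ) = θ ^ 4 := by
  rw [MulChar.eq_iff (prim_zpowers hα h0), Units.val_mk0]
  have := theta_pow_apply hθ 4 1 h0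
  rw [pow_one, mul_one, hζ] at this
  rw [this, MulChar.ringHomComp_apply, quad_alpha hα h0 hf0 hf]
  simp

theorem quad_eq_apply {α : F} (hα : IsPrimitiveElt α) (h0 : α ≠ 0) {f : ℕ} (hf0 : f ≠ 0)
    (hf : Fintype.card F - 1 = 2 * f)
    {ζ : ℂ} {θ : MulChar F ℂ} (hζ : ζ ^ 4 = -1) (hθ : θ α = ζ) (x : F) :
    (θ ^ 4) x = ((quadraticChar F x : ℤ) : ℂ) := by
  rw [← quad_eq hα h0 hf0 hf hζ hθ]; rfl

theorem sum_sq (hF : ringChar F ≠ 2) (g : F → ℂ) :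
    ∑ z, g (z ^ 2) = ∑ w, g w * (1 + ((quadraticChar F w : ℤ) : ℂ)) := by
  rw [← Finset.sum_fiberwise (s := Finset.univ) (g := fun z : F => z ^ 2)]
  apply Finset.sum_congr rfl
  intro w _
  have h := quadraticChar_card_sqrts hF w
  rw [Finset.sum_congr rfl (g := fun _ => g w)]
  · rw [Finset.sum_const, nsmul_eq_mul, mul_comm]
    congr 1
    have h2 : {x : F | x ^ 2 = w}.toFinset = Finset.univ.filter (fun z : F => z ^ 2 = w) := by
      ext; simp
    rw [h2] at h
    rw [← Int.cast_natCast, h]; push_cast; ring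
  · intro z hz
    rw [(Finset.mem_filter.1 hz).2]

theorem jac_dup {θ : MulChar F ℂ} (hF : ringChar F ≠ 2) (h1 : θ ≠ 1) :
    θ 4 * jacobiSum θ θ =
      jacobiSum ((quadraticChar F).ringHomComp (Int.castRingHom ℂ)) θ := by
  have h2 : (2 : F) ≠ 0 := Ring.two_ne_zero hF
  have e1 : θ 4 * jacobiSum θ θ = ∑ z : F, θ (1 - z ^ 2) := by
    rw [jacobiSum, Finset.mul_sum]
    apply Fintype.sum_bijective (fun x : F => 2 * x - 1)
    · constructor
      · intro x y h
        have : 2 * (x - y) = 0 := by linear_combination h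
        rcases mul_eq_zero.1 this with h | h
        · exact absurd h h2
        · exact sub_eq_zero.1 h
      · intro y
        exact ⟨(y + 1) / 2, by field_simp; ring⟩
    · intro x
      rw [← map_mul, ← map_mul]
      congr 1; ring
  rw [e1, sum_sq hF (fun w => θ (1 - w))]
  simp only [mul_add, mul_one, Finset.sum_add_distrib]
  have e2 : ∑ w : F, θ (1 - w) = 0 := by
    rw [← MulChar.sum_eq_zero_of_ne_one h1]
    exact Fintype.sum_equiv (Equiv.subLeft 1) _ _ (fun x => rfl)
  rw [e2, zero_add, jacobiSum]
  apply Finset.sum_congr rfl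
  intro x _
  rw [mul_comm]; rfl

end Chars
section Jac
set_option linter.unusedSectionVars false
variable {F : Type*} [Field F] [Fintype F] [DecidableEq F]

theorem jac_facts {α : F} (hα : IsPrimitiveElt α) (h0 : α ≠ 0) {f : ℕ} (hf0 : f ≠ 0)
    (hf : Fintype.card F - 1 = 16 * f) (hF : ringChar F ≠ 2)
    {ζ : ℂ} {θ : MulChar F ℂ} (hζ : ζ ^ 4 = -1) (hθ : θ α = ζ) (h4 : θ 4 = -1) :
    ∃ K K' L L' : ℂ, K * K' = Fintype.card F ∧ L * L' = Fintype.card F ∧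
      jacobiSum (θ ^ 2) (θ ^ 4) = K ∧ jacobiSum (θ ^ 6) (θ ^ 4) = K' ∧
      jacobiSum (θ ^ 1) (θ ^ 4) = L ∧ jacobiSum (θ ^ 3) (θ ^ 4) = L ∧
      jacobiSum (θ ^ 5) (θ ^ 4) = L' ∧ jacobiSum (θ ^ 7) (θ ^ 4) = L' ∧
      jacobiSum (θ ^ 0) (θ ^ 4) = -1 ∧ jacobiSum (θ ^ 4) (θ ^ 4) = -1 ∧
      jacobiSum (θ ^ 0) (θ ^ 2) = -1 ∧ jacobiSum (θ ^ 1) (θ ^ 2) = -K ∧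
      jacobiSum (θ ^ 2) (θ ^ 2) = K ∧ jacobiSum (θ ^ 3) (θ ^ 2) = -L ∧
      jacobiSum (θ ^ 4) (θ ^ 2) = K ∧ jacobiSum (θ ^ 5) (θ ^ 2) = -K ∧
      jacobiSum (θ ^ 6) (θ ^ 2) = -1 ∧ jacobiSum (θ ^ 7) (θ ^ 2) = -L' := by
  obtain ⟨P, hP⟩ : ∃ P : AddChar F ℂ, P.IsPrimitive :=
    ⟨_, AddChar.FiniteField.primitiveChar_to_Complex_isPrimitive F⟩
  have hq0 : (Fintype.card F : ℂ) ≠ 0 := by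
    exact_mod_cast Fintype.card_ne_zero
  have h8 := theta8 hα h0 hζ hθ
  have hne := theta_ne_one h0 hζ hθ
  have hneg := theta_neg_one hα h0 hf hζ hθ
  obtain ⟨G, hG⟩ : ∃ G : ℕ → ℂ, G = fun u => gaussSum (θ ^ u) P := ⟨_, rfl⟩
  have hG0 : ∀ u, u % 8 ≠ 0 → G u ≠ 0 := fun u hu => by
    rw [hG]; exact gaussSum_ne_zero_of_nontrivial hq0 (hne u hu) hP
  have hG8 : ∀ u, G (u + 8) = G u := fun u => by
    rw [hG]; simp only [pow_add, h8, mul_one]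
  have hJ : ∀ u v, (u + v) % 8 ≠ 0 →
      jacobiSum (θ ^ u) (θ ^ v) = G u * G v / G (u + v) := by
    intro u v huv
    rw [hG]
    simp only [pow_add]
    exact jacobiSum_eq_gaussSum_mul_gaussSum_div_gaussSum hq0
      (by rw [← pow_add]; exact hne _ huv) hP
  have hGG : ∀ u v, u % 8 ≠ 0 → u + v = 8 → G u * G v = Fintype.card F := by
    intro u v hu huv
    have hinv : (θ ^ u)⁻¹ = θ ^ v := by
      apply inv_eq_of_mul_eq_one_right
      rw [← pow_add, huv, h8]
    have := gaussSum_mul_gaussSum_eq_card (hne u hu) hP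
    rw [hinv] at this
    have h2 := mul_gaussSum_inv_eq_gaussSum (θ ^ v) P
    rw [hneg, one_mul] at h2
    rw [hG, ← this, h2]
  have hdup := jac_dup hF (by simpa using hne 1 (by norm_num))
  rw [quad_eq hα h0 (f := 8 * f) (by omega) (by rw [hf]; ring) hζ hθ, h4] at hdup
  have hj11 := hJ 1 1 (by norm_num)
  have hj41 := hJ 4 1 (by norm_num)
  rw [pow_one] at hj11 hj41
  rw [hj11, hj41] at hdup
  have n1 := hG0 1 (by norm_num)
  have n2 := hG0 2 (by norm_num)
  have n3 := hG0 3 (by norm_num)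
  have n4 := hG0 4 (by norm_num)
  have n5 := hG0 5 (by norm_num)
  have g17 := hGG 1 7 (by norm_num) (by norm_num)
  have g26 := hGG 2 6 (by norm_num) (by norm_num)
  have g35 := hGG 3 5 (by norm_num) (by norm_num)
  have g44 := hGG 4 4 (by norm_num) (by norm_num)
  have e9 : G 9 = G 1 := hG8 1
  have e10 : G 10 = G 2 := hG8 2
  have e11 : G 11 = G 3 := hG8 3
  rw [← g44] at g17 g26 g35
  norm_num at hdup
  have h7 : G 7 = G 4 * G 4 / G 1 := by field_simp; linear_combination g17
  have h6 : G 6 = G 4 * G 4 / G 2 := by field_simp; linear_combination g26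
  have h5 : G 5 = - (G 2 * G 4 / G 1) := by
    field_simp at hdup ⊢
    linear_combination -hdup
  have h3 : G 3 = - (G 1 * G 4 / G 2) := by
    rw [h5] at g35
    field_simp at g35 ⊢
    linear_combination -g35
  have j44 : jacobiSum (θ ^ 4) (θ ^ 4) = -1 := by
    have hinv : (θ ^ 4)⁻¹ = θ ^ 4 := by
      apply inv_eq_of_mul_eq_one_right
      rw [← pow_add, h8]
    have := jacobiSum_nontrivial_inv (hne 4 (by norm_num))
    rw [hinv, hneg] at this
    exact this
  have j62 : jacobiSum (θ ^ 6) (θ ^ 2) = -1 := by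
    have hinv : (θ ^ 6)⁻¹ = θ ^ 2 := by
      apply inv_eq_of_mul_eq_one_right
      rw [← pow_add, h8]
    have := jacobiSum_nontrivial_inv (hne 6 (by norm_num))
    rw [hinv, hneg] at this
    exact this
  have j02 : jacobiSum (θ ^ 0) (θ ^ 2) = -1 := by
    rw [pow_zero]; exact jacobiSum_one_nontrivial (hne 2 (by norm_num))
  have j04 : jacobiSum (θ ^ 0) (θ ^ 4) = -1 := by
    rw [pow_zero]; exact jacobiSum_one_nontrivial (hne 4 (by norm_num))
  refine ⟨G 2 * G 2 / G 4, G 4 * G 4 * G 4 / (G 2 * G 2), - (G 1 * G 1 / G 2),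
    - (G 2 * G 4 * G 4 / (G 1 * G 1)), ?_, ?_, ?_, ?_, ?_, ?_, ?_, ?_, j04, j44, j02, ?_, ?_,
    ?_, ?_, ?_, j62, ?_⟩
  · rw [← g44]; field_simp
  · rw [← g44]; field_simp
  all_goals
    rw [hJ _ _ (by norm_num)]
    try norm_num [e9, e10, e11, h3, h5, h6, h7]
    try field_simp
end Jac
section Arith
set_option linter.unusedSectionVars false
variable {F : Type*} [Field F] [Fintype F] [DecidableEq F]

theorem two_mem_of_dvd {α : F} (hα : IsPrimitiveElt α) (h0 : α ≠ 0) {p c : ℕ} (hp : p.Prime)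
    [CharP F p] (hp2 : p ≠ 2) (hc : Fintype.card F - 1 = 4 * c) (hd : (p - 1) ∣ c) :
    (2 : F) ∈ cycClass α 4 0 := by
  haveI : Fact p.Prime := ⟨hp⟩
  have h20 : (2 : ZMod p) ≠ 0 := by
    have : ((2 : ℕ) : ZMod p) ≠ 0 := by
      rw [Ne, ZMod.natCast_eq_zero_iff]
      intro h
      exact hp2 ((Nat.prime_dvd_prime_iff_eq hp Nat.prime_two).1 h)
    exact_mod_cast this
  have h1 : (2 : ZMod p) ^ (p - 1) = 1 := ZMod.pow_card_sub_one_eq_one h20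
  have h1' : (2 : F) ^ (p - 1) = 1 := by
    have := congrArg (ZMod.castHom (dvd_refl p) F) h1
    rw [map_pow, map_one, map_ofNat] at this
    exact this
  have h2F : (2 : F) ≠ 0 := by
    intro h
    rw [h, zero_pow (by have := hp.two_le; omega)] at h1'
    exact zero_ne_one h1'
  obtain ⟨n, hn⟩ := hα 2 h2F
  have he : 4 ∣ Fintype.card F - 1 := ⟨c, hc⟩
  rw [← hn, pow_mem_cyc hα h0 (by norm_num) he]
  obtain ⟨d, rfl⟩ := hd
  have h3 : α ^ (n * ((p - 1) * d)) = α ^ 0 := by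
    rw [pow_mul, hn, pow_mul, h1', one_pow, pow_zero]
  rw [prim_pow_eq hα h0, hc] at h3
  have h4 := (Nat.modEq_zero_iff_dvd).1 h3
  have hcp : 0 < (p - 1) * d := by
    have := Fintype.one_lt_card (α := F); omega
  have := Nat.dvd_of_mul_dvd_mul_right hcp h4
  omega

theorem p_mod_eight {α : F} (hα : IsPrimitiveElt α) (h0 : α ≠ 0) {p m : ℕ} (hp : p.Prime)
    [CharP F p] (hq : Fintype.card F = p ^ m) (h16 : Fintype.card F % 16 = 1)
    (h2 : (2 : F) ∉ cycClass α 4 0) : p % 8 = 1 := by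
  have hc1 := Fintype.one_lt_card (α := F)
  have hp2 : p ≠ 2 := by
    rintro rfl
    rcases m with _ | m
    · simp at hq; omega
    · rw [pow_succ] at hq; omega
  have hodd : p % 2 = 1 := hp.eq_two_or_odd.resolve_left hp2
  have hp1 : 2 ≤ p := hp.two_le
  by_contra hcon
  apply h2
  -- reduce to divisibility
  have key : 4 * (p - 1) ∣ p ^ m - 1 := by
    by_cases h34 : p % 4 = 3
    · have hme : m % 2 = 0 := by
        by_contra hmo
        have hm : m = 2 * (m / 2) + 1 := by omega
        have : p ^ m % 4 = 3 := by
          rw [hm, pow_succ, pow_mul, Nat.mul_mod, Nat.pow_mod, Nat.pow_mod p 2, h34]; norm_num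
        rw [← hq] at this; omega
      obtain ⟨k, rfl⟩ : 2 ∣ m := Nat.dvd_of_mod_eq_zero hme
      have h1 : p ^ 2 - 1 ∣ p ^ (2 * k) - 1 := by
        rw [pow_mul]; simpa using Nat.sub_dvd_pow_sub_pow (p ^ 2) 1 k
      refine Dvd.dvd.trans ?_ h1
      obtain ⟨r, rfl⟩ : ∃ r, p = 4 * r + 3 := ⟨p / 4, by omega⟩
      have : (4 * r + 3) ^ 2 - 1 = 4 * (4 * r + 3 - 1) * (r + 1) := by
        rw [show 4 * r + 3 - 1 = 4 * r + 2 by omega, Nat.sub_eq_iff_eq_add (by nlinarith)]; ring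
      rw [this]; exact Dvd.intro _ rfl
    · have h58 : p % 8 = 5 := by omega
      have hme : m % 4 = 0 := by
        have hm : m = 4 * (m / 4) + m % 4 := by omega
        have hlt : m % 4 < 4 := Nat.mod_lt _ (by norm_num)
        generalize m % 4 = r at hm hlt
        have h5 : p % 16 = 5 ∨ p % 16 = 13 := by omega
        have h4' : p ^ 4 % 16 = 1 := by
          rw [Nat.pow_mod]; rcases h5 with h | h <;> rw [h]
        have hr : p ^ m % 16 = (p % 16) ^ r % 16 := by
          rw [hm, pow_add, pow_mul, Nat.mul_mod, Nat.pow_mod (p ^ 4), h4', one_pow, Nat.pow_mod p r]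
          norm_num
        rw [← hq, h16] at hr
        interval_cases r <;> rcases h5 with h | h <;> rw [h] at hr <;> omega
      obtain ⟨k, rfl⟩ : 4 ∣ m := Nat.dvd_of_mod_eq_zero hme
      have h1 : p ^ 4 - 1 ∣ p ^ (4 * k) - 1 := by
        rw [pow_mul]; simpa using Nat.sub_dvd_pow_sub_pow (p ^ 4) 1 k
      refine Dvd.dvd.trans ?_ h1
      obtain ⟨r, rfl⟩ : ∃ r, p = 2 * r + 1 := ⟨p / 2, by omega⟩
      have : (2 * r + 1) ^ 4 - 1 = 4 * (2 * r + 1 - 1) * ((r + 1) * (2 * r ^ 2 + 2 * r + 1)) := by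
        rw [show 2 * r + 1 - 1 = 2 * r by omega, 
          Nat.sub_eq_iff_eq_add (Nat.one_le_pow _ _ (by omega))]; ring
      rw [this]; exact Dvd.intro _ rfl
  obtain ⟨d, hd⟩ := key
  exact two_mem_of_dvd hα h0 hp hp2 (c := (p - 1) * d) (by rw [hq, hd]; ring) (Dvd.intro _ rfl)

theorem theta_four {α : F} (hα : IsPrimitiveElt α) (h0 : α ≠ 0) (h16 : Fintype.card F % 16 = 1)
    (h2 : (2 : F) ∉ cycClass α 4 0)
    {ζ : ℂ} {θ : MulChar F ℂ} (hζ : ζ ^ 4 = -1) (hθ : θ α = ζ) (h2F : (2 : F) ≠ 0) :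
    θ 4 = -1 := by
  obtain ⟨n, hn⟩ := hα 2 h2F
  have he : 4 ∣ Fintype.card F - 1 := by omega
  have he2 : 2 ∣ Fintype.card F - 1 := by omega
  rw [← hn, pow_mem_cyc hα h0 (by norm_num) he] at h2
  have hs : IsSquare (2 : F) := FiniteField.isSquare_two_iff.2 (by omega)
  obtain ⟨r, hr⟩ := hs
  have hr0 : r ≠ 0 := by rintro rfl; simp at hr; exact h2F hr
  obtain ⟨k, rfl⟩ := hα r hr0
  rw [← hn, ← pow_add, prim_pow_eq hα h0] at hr
  have h3 : n % 2 = (k + k) % 2 := Nat.ModEq.of_dvd he2 hr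
  have hn4 : n % 4 = 2 := by omega
  have : (4 : F) = α ^ (2 * n) := by rw [mul_comm, pow_mul, hn]; norm_num
  rw [this]
  have h := theta_pow_apply hθ 1 (2 * n) h0
  rw [pow_one, one_mul] at h
  rw [h, show 2 * n = 8 * (n / 4) + 4 by omega, pow_add, pow_mul, zeta8 hζ, one_pow, one_mul, hζ]

theorem lucas_ne {p : ℕ} (hp : p.Prime) (h8 : p % 8 = 1) (m : ℕ) :
    ¬ p ∣ Nat.choose ((p ^ m - 1) / 2) ((p ^ m - 1) / 8) := by
  haveI : Fact p.Prime := ⟨hp⟩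
  have hp1 := hp.two_le
  induction m with
  | zero => simp; exact hp.ne_one
  | succ m ih =>
    obtain ⟨s, hs⟩ : ∃ s, p = 8 * s + 1 := ⟨p / 8, by omega⟩
    obtain ⟨t, ht⟩ : ∃ t, p ^ m = 8 * t + 1 := by
      have : p ^ m % 8 = 1 := by rw [Nat.pow_mod, h8]; simp
      exact ⟨p ^ m / 8, by omega⟩
    have e1 : p ^ (m + 1) = 8 * (p * t + s) + 1 := by rw [pow_succ, ht]; nlinarith
    have e2 : (p ^ (m + 1) - 1) / 2 = 4 * s + p * (4 * t) := by
      rw [e1]; have : p * (4 * t) = 4 * (p * t) := by ring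
      omega
    have e3 : (p ^ (m + 1) - 1) / 8 = s + p * t := by rw [e1]; omega
    have e4 : (p ^ m - 1) / 2 = 4 * t := by omega
    have e5 : (p ^ m - 1) / 8 = t := by omega
    rw [e4, e5] at ih
    rw [e2, e3]
    have hl := Choose.choose_modEq_choose_mod_mul_choose_div_nat
      (p := p) (n := 4 * s + p * (4 * t)) (k := s + p * t)
    rw [Nat.add_mul_mod_self_left, Nat.add_mul_mod_self_left,
      Nat.add_mul_div_left _ _ (by omega), Nat.add_mul_div_left _ _ (by omega),
      Nat.mod_eq_of_lt (by omega), Nat.mod_eq_of_lt (by omega), Nat.div_eq_of_lt (by omega),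
      Nat.div_eq_of_lt (by omega), zero_add, zero_add] at hl
    intro hd
    rw [(hl.dvd_iff (dvd_refl p))] at hd
    rcases hp.dvd_mul.1 hd with h | h
    · have h5 : p ∣ (4 * s).factorial := by
        rw [← Nat.choose_mul_factorial_mul_factorial (show s ≤ 4 * s by omega)]
        exact Dvd.dvd.mul_right (Dvd.dvd.mul_right h _) _
      have := hp.dvd_factorial.1 h5
      omega
    · exact ih h

theorem sum_pow_cyc4 {α : F} (hα : IsPrimitiveElt α) (h0 : α ≠ 0) {f : ℕ} (hf0 : f ≠ 0)
    (hf : Fintype.card F - 1 = 16 * f) (n : ℕ) :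
    ∑ x ∈ cycClass α 4 0, x ^ n = if 4 * f ∣ n then ((4 * f : ℕ) : F) else 0 := by
  have he : 4 ∣ Fintype.card F - 1 := ⟨4 * f, by rw [hf]; ring⟩
  split_ifs with h
  · have : ∀ x ∈ cycClass α 4 0, x ^ n = 1 := by
      intro x hx
      obtain ⟨m, rfl, hm⟩ := (mem_cyc hα h0 (by norm_num) he x).1 hx
      obtain ⟨c, rfl⟩ := h
      rw [← pow_mul, ← pow_zero α, prim_pow_eq hα h0, hf, Nat.modEq_zero_iff_dvd]
      obtain ⟨d, rfl⟩ := Nat.dvd_of_mod_eq_zero hm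
      exact ⟨c * d, by ring⟩
    rw [Finset.sum_congr rfl this, Finset.sum_const, card_cyc hα h0 (by norm_num) he, hf]
    rw [show 16 * f / 4 = 4 * f by omega]; simp
  · have h1 := sum_mul_cyc hα h0 he 4 (k := 0) (l := 0) (by norm_num) (by norm_num) (by norm_num)
      (fun x : F => x ^ n)
    simp only [mul_pow, ← Finset.mul_sum] at h1
    have h2 : (α ^ 4) ^ n ≠ 1 := by
      rw [← pow_mul, ← pow_zero α, Ne, prim_pow_eq hα h0, hf, Nat.modEq_zero_iff_dvd]
      rintro ⟨c, hc⟩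
      exact h ⟨c, by nlinarith⟩
    have h3 : ((α ^ 4) ^ n - 1) * ∑ x ∈ cycClass α 4 0, x ^ n = 0 := by linear_combination -h1
    exact (mul_eq_zero.1 h3).resolve_left (sub_ne_zero.2 h2)

theorem A_mod {α : F} (hα : IsPrimitiveElt α) (h0 : α ≠ 0) {f : ℕ} (hf0 : f ≠ 0)
    (hf : Fintype.card F - 1 = 16 * f) (hF : ringChar F ≠ 2) :
    ((∑ x ∈ cycClass α 8 0, quadraticChar F (1 - x) -
      ∑ x ∈ cycClass α 8 4, quadraticChar F (1 - x) : ℤ) : F) =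
      (8 * f : ℕ) * (Nat.choose (8 * f) (2 * f) : F) := by
  have hc1 := Fintype.one_lt_card (α := F)
  have he : 8 ∣ Fintype.card F - 1 := ⟨2 * f, by rw [hf]; ring⟩
  have hhalf : Fintype.card F / 2 = 8 * f := by omega
  have hm1 : α ^ (8 * f) = -1 := prim_half hα h0 (by rw [hf]; ring)
  push_cast
  have hq : ∀ x : F, ((quadraticChar F x : ℤ) : F) = x ^ (8 * f) := by
    intro x; rw [quadraticChar_eq_pow_of_char_ne_two' hF, hhalf]
  simp only [hq]
  have e1 : ∑ x ∈ cycClass α 8 0, (1 - x) ^ (8 * f) - ∑ x ∈ cycClass α 8 4, (1 - x) ^ (8 * f)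
      = ∑ x ∈ cycClass α 4 0, x ^ (2 * f) * (1 - x) ^ (8 * f) := by
    rw [sum_cyc4 hα h0 he (by norm_num), sub_eq_add_neg, ← Finset.sum_neg_distrib]
    congr 1
    · apply Finset.sum_congr rfl
      intro x hx
      obtain ⟨m, rfl, hm⟩ := (mem_cyc hα h0 (by norm_num) he x).1 hx
      obtain ⟨d, rfl⟩ := Nat.dvd_of_mod_eq_zero hm
      rw [← pow_mul α (8 * d), show 8 * d * (2 * f) = 8 * f * (2 * d) by ring, pow_mul α (8 * f),
        hm1, pow_mul (-1 : F)]
      simp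
    · apply Finset.sum_congr rfl
      intro x hx
      obtain ⟨m, rfl, hm⟩ := (mem_cyc hα h0 (by norm_num) he x).1 hx
      obtain ⟨d, rfl⟩ : ∃ d, m = 8 * d + 4 := ⟨m / 8, by omega⟩
      rw [← pow_mul α (8 * d + 4), show (8 * d + 4) * (2 * f) = 8 * f * (2 * d) + 8 * f by ring,
        pow_add α (8 * f * (2 * d)), pow_mul α (8 * f),
        hm1, pow_mul (-1 : F)]
      simp
  rw [e1]
  have e2 : ∀ x : F, x ^ (2 * f) * (1 - x) ^ (8 * f) =
      ∑ j ∈ Finset.range (8 * f + 1), ((-1) ^ j * (Nat.choose (8 * f) j : F)) * x ^ (2 * f + j) := by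
    intro x
    rw [sub_eq_neg_add, add_pow, Finset.mul_sum]
    apply Finset.sum_congr rfl
    intro j _
    rw [neg_pow, pow_add]; ring
  simp only [e2]
  rw [Finset.sum_comm]
  simp only [← Finset.mul_sum, sum_pow_cyc4 hα h0 hf0 hf]
  have hsub : ({2 * f, 6 * f} : Finset ℕ) ⊆ Finset.range (8 * f + 1) := by
    intro j hj
    simp at hj ⊢; omega
  rw [← Finset.sum_subset hsub]
  · rw [Finset.sum_pair (by omega), if_pos ⟨1, by ring⟩, if_pos ⟨2, by ring⟩,
      show (8 * f).choose (6 * f) = (8 * f).choose (2 * f) from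
        Nat.choose_symm_of_eq_add (by ring),
      pow_mul, show 6 * f = 2 * (3 * f) by ring, pow_mul]
    push_cast; simp; ring
  · intro j hj hj'
    rw [if_neg, mul_zero]
    rintro ⟨c, hc⟩
    simp at hj hj'
    have : c < 3 := by
      by_contra h
      have : 4 * f * 3 ≤ 4 * f * c := Nat.mul_le_mul_left _ (by omega)
      omega
    interval_cases c <;> omega

theorem A_ne {α : F} (hα : IsPrimitiveElt α) (h0 : α ≠ 0) {f : ℕ} (hf0 : f ≠ 0)
    (hf : Fintype.card F - 1 = 16 * f) (hF : ringChar F ≠ 2) {p m : ℕ} (hp : p.Prime)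
    [CharP F p] (hq : Fintype.card F = p ^ m) (h8 : p % 8 = 1) :
    ¬ (p : ℤ) ∣ (∑ x ∈ cycClass α 8 0, quadraticChar F (1 - x) -
      ∑ x ∈ cycClass α 8 4, quadraticChar F (1 - x)) := by
  rw [← CharP.intCast_eq_zero_iff F p, A_mod hα h0 hf0 hf hF, ← Nat.cast_mul,
    CharP.cast_eq_zero_iff F p, hp.dvd_mul]
  have hc1 := Fintype.one_lt_card (α := F)
  have hl := lucas_ne hp h8 m
  rw [← hq, hf, show 16 * f / 2 = 8 * f by omega, show 16 * f / 8 = 2 * f by omega] at hl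
  rintro (h | h)
  · have hm : m ≠ 0 := by rintro rfl; simp at hq; omega
    have h1 : p ∣ 16 * f + 1 := by
      rw [show 16 * f + 1 = p ^ m by omega]; exact dvd_pow_self p hm
    have h2 : p ∣ 16 * f := by rw [show 16 * f = 2 * (8 * f) by ring]; exact Dvd.dvd.mul_left h 2
    have := (Nat.dvd_add_right h2).1 h1
    exact hp.one_lt.ne' (Nat.dvd_one.1 this)
  · exact hl h

/-- uniqueness of the proper representation -/
theorem repr_unique {p m : ℕ} (hp : p.Prime) (hp3 : 3 < p) {q A B b : ℤ} (hq : q = (p : ℤ) ^ m)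
    (h1 : q = A ^ 2 + 2 * B ^ 2) (h2 : q = (-3) ^ 2 + 2 * b ^ 2) (hA : ¬ (p : ℤ) ∣ A) :
    A = 3 ∨ A = -3 := by
  have hpp : Prime (p : ℤ) := Nat.prime_iff_prime_int.1 hp
  have hprod : 2 * ((3 * B - b * A) * (3 * B + b * A)) = q * (9 - A ^ 2) := by
    linear_combination (9 : ℤ) * -h1 + A ^ 2 * h2
  have hq0 : 0 < q := by rw [h2]; nlinarith [sq_nonneg b]
  have n2 : ¬ (p : ℤ) ∣ 2 := by
    intro h; have := Int.le_of_dvd (by norm_num) h; omega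
  have n3 : ¬ (p : ℤ) ∣ 3 := by
    intro h; have := Int.le_of_dvd (by norm_num) h; omega
  by_cases hm : m = 0
  · subst hm; simp at hq; nlinarith [sq_nonneg b]
  have hpq : (p : ℤ) ∣ q := by rw [hq]; exact dvd_pow_self _ hm
  -- not both factors divisible
  have hnb : ¬ ((p : ℤ) ∣ 3 * B - b * A ∧ (p : ℤ) ∣ 3 * B + b * A) := by
    rintro ⟨ha, hb⟩
    have : (p : ℤ) ∣ 2 * (3 * B) := by
      have := dvd_add ha hb; ring_nf at this ⊢; exact this
    have hB : (p : ℤ) ∣ B := ((hpp.dvd_or_dvd this).resolve_left n2 |> hpp.dvd_or_dvd).resolve_left n3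
    have : (p : ℤ) ∣ A ^ 2 := by
      have e : A ^ 2 = q - B * (2 * B) := by rw [h1]; ring
      rw [e]; exact dvd_sub hpq (Dvd.dvd.mul_right hB _)
    exact hA (hpp.dvd_of_dvd_pow this)
  have fin : ∀ c : ℤ, q = (-3) ^ 2 + 2 * c ^ 2 → q ∣ 3 * B - c * A → A = 3 ∨ A = -3 := by
    intro c hc hd
    have hz : 3 * B - c * A = 0 := by
      by_contra hne
      have e : q * q = (3 * A + 2 * c * B) ^ 2 + 2 * (3 * B - c * A) ^ 2 := by
        calc q * q = (A ^ 2 + 2 * B ^ 2) * ((-3) ^ 2 + 2 * c ^ 2) := by rw [← h1, ← hc]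
          _ = _ := by ring
      have hle : q ≤ |3 * B - c * A| := Int.le_of_dvd (abs_pos.2 hne) ((dvd_abs _ _).2 hd)
      have : q * q ≤ (3 * B - c * A) ^ 2 := by
        rw [← sq_abs]; nlinarith
      nlinarith [sq_nonneg (3 * A + 2 * c * B)]
    have e : q * (A ^ 2 - 9) = 0 := by
      linear_combination (A ^ 2) * hc - 9 * h1 - 2 * (3 * B + c * A) * hz 
    have : (A - 3) * (A + 3) = 0 := by
      rcases mul_eq_zero.1 e with h | h
      · omega
      · linear_combination h
    rcases mul_eq_zero.1 this with h | h
    · left; omega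
    · right; omega
  have hcop2 : IsCoprime ((p : ℤ) ^ m) 2 := by
    apply IsCoprime.pow_left
    exact (Prime.coprime_iff_not_dvd hpp).2 n2
  have hd : q ∣ (3 * B - b * A) * (3 * B + b * A) := by
    rw [hq] at hprod ⊢
    exact hcop2.dvd_of_dvd_mul_left (Dvd.intro _ hprod.symm)
  by_cases h : (p : ℤ) ∣ 3 * B - b * A
  · have h' : ¬ (p : ℤ) ∣ 3 * B + b * A := fun h' => hnb ⟨h, h'⟩
    refine fin b h2 ?_
    have hcop : IsCoprime q (3 * B + b * A) := by
      rw [hq]; exact IsCoprime.pow_left ((Prime.coprime_iff_not_dvd hpp).2 h')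
    exact hcop.dvd_of_dvd_mul_right hd
  · refine fin (-b) (by rw [h2]; ring) ?_
    have hcop : IsCoprime q (3 * B - b * A) := by
      rw [hq]; exact IsCoprime.pow_left ((Prime.coprime_iff_not_dvd hpp).2 h)
    have := hcop.dvd_of_dvd_mul_left hd
    rwa [show 3 * B - -b * A = 3 * B + b * A by ring]

end Arith
section Key
set_option linter.unusedSectionVars false
variable {F : Type*} [Field F] [Fintype F] [DecidableEq F]

theorem int_gauss {i : ℂ} (hi : i ^ 2 = -1) {a b : ℤ} (h : (a : ℂ) + b * i = 0) :
    a = 0 ∧ b = 0 := by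
  have h1 : ((a ^ 2 + b ^ 2 : ℤ) : ℂ) = 0 := by
    push_cast
    linear_combination (a - b * i) * h + (b : ℂ) ^ 2 * hi
  have h2 : a ^ 2 + b ^ 2 = 0 := by exact_mod_cast h1
  constructor <;> nlinarith [sq_nonneg a, sq_nonneg b]

theorem jac_expand' {α : F} (hα : IsPrimitiveElt α) (h0 : α ≠ 0)
    (he : 8 ∣ Fintype.card F - 1) {ζ : ℂ} {θ : MulChar F ℂ} (hζ : ζ ^ 4 = -1) (hθ : θ α = ζ)
    (u : ℕ) (φ : MulChar F ℂ) (e : ℕ → ℂ) (hE : e = fun k => ∑ x ∈ cycClass α 8 k, φ (1 - x)) :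
    jacobiSum (θ ^ u) φ = ζ ^ (u * 0 % 8) * e 0 + ζ ^ (u * 1 % 8) * e 1 + ζ ^ (u * 2 % 8) * e 2
      + ζ ^ (u * 3 % 8) * e 3 + ζ ^ (u * 4 % 8) * e 4 + ζ ^ (u * 5 % 8) * e 5
      + ζ ^ (u * 6 % 8) * e 6 + ζ ^ (u * 7 % 8) * e 7 := by
  have hm : ∀ n, ζ ^ n = ζ ^ (n % 8) := by
    intro n
    conv_lhs => rw [← Nat.div_add_mod n 8, pow_add, pow_mul, zeta8 hζ, one_pow, one_mul]
  rw [jac_expand hα h0 he hζ hθ]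
  simp only [Finset.sum_range_succ, Finset.sum_range_zero, zero_add, hE]
  rw [hm (u * 0), hm (u * 1), hm (u * 2), hm (u * 3), hm (u * 4), hm (u * 5), hm (u * 6),
    hm (u * 7)]

theorem gauss_int_sum {i : ℂ} (hi : i ^ 2 = -1) (s : Finset F) (g : F → ℂ)
    (hg : ∀ x, g x = 0 ∨ ∃ n : ℕ, g x = i ^ n) : ∃ a b : ℤ, ∑ x ∈ s, g x = a + b * i := by
  have h1 : ∀ n : ℕ, ∃ a b : ℤ, i ^ n = a + b * i := by
    intro n
    induction n with
    | zero => exact ⟨1, 0, by simp⟩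
    | succ n ih =>
      obtain ⟨a, b, h⟩ := ih
      refine ⟨-b, a, ?_⟩
      rw [pow_succ, h]; push_cast; linear_combination (b : ℂ) * hi
  induction s using Finset.induction_on with
  | empty => exact ⟨0, 0, by simp⟩
  | insert x s hx ih =>
    obtain ⟨a, b, h⟩ := ih
    rw [Finset.sum_insert hx, h]
    rcases hg x with h' | ⟨n, hn⟩
    · exact ⟨a, b, by rw [h', zero_add]⟩
    · obtain ⟨c, d, hcd⟩ := h1 n
      refine ⟨c + a, d + b, ?_⟩
      rw [hn, hcd]; push_cast; ring

theorem key_sums {α : F} (hα : IsPrimitiveElt α) (h0 : α ≠ 0) {f : ℕ} (hf0 : f ≠ 0)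
    (hf : Fintype.card F - 1 = 16 * f) (hF : ringChar F ≠ 2)
    {ζ : ℂ} {θ : MulChar F ℂ} (hζ : ζ ^ 4 = -1) (hθ : θ α = ζ) (h4 : θ 4 = -1)
    {p m : ℕ} (hp : p.Prime) [CharP F p] (hq : Fintype.card F = p ^ m) (h8 : p % 8 = 1)
    (b : ℤ) (hb : (Fintype.card F : ℤ) = (-3) ^ 2 + 2 * b ^ 2)
    (e : ℕ → ℤ) (he : e = fun k => ∑ x ∈ cycClass α 8 k, quadraticChar F (1 - x))
    (E : ℕ → ℂ) (hE : E = fun k => ∑ x ∈ cycClass α 8 k, (θ ^ 2) (1 - x)) :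
    (e 1 + e 5) + (e 3 + e 7) = 0 ∧
    (∃ X : ℤ, (Fintype.card F : ℤ) = X ^ 2 + 4 * (e 1 + e 5) ^ 2) ∧
    E 1 + E 5 + E 4 + ζ ^ 2 * (E 3 + E 7 + E 4) = 0 := by
  have hd8 : 8 ∣ Fintype.card F - 1 := ⟨2 * f, by rw [hf]; ring⟩
  obtain ⟨K, K', L, L', hKK, hLL, j24, j64, j14, j34, j54, j74, j04, j44, j02, j12, j22, j32, j42,
    j52, j62, j72⟩ := jac_facts hα h0 hf0 hf hF hζ hθ h4
  have z5 : ζ ^ 5 = -ζ := by linear_combination ζ * hζ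
  have z6 : ζ ^ 6 = -ζ ^ 2 := by linear_combination ζ ^ 2 * hζ
  have z7 : ζ ^ 7 = -ζ ^ 3 := by linear_combination ζ ^ 3 * hζ
  have hec : (fun k => (e k : ℂ)) = fun k => ∑ x ∈ cycClass α 8 k, (θ ^ 4) (1 - x) := by
    funext k
    rw [he]
    push_cast
    apply Finset.sum_congr rfl
    intro x _
    rw [quad_eq_apply hα h0 (f := 8 * f) (by omega) (by rw [hf]; ring) hζ hθ]
  have X4 := fun u => jac_expand' hα h0 hd8 hζ hθ u (θ ^ 4) _ hec
  have X2 := fun u => jac_expand' hα h0 hd8 hζ hθ u (θ ^ 2) _ hE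
  rw [X4] at j24 j64 j14 j34 j54 j74 j04 j44
  rw [X2] at j02 j12 j22 j32 j42 j52 j62 j72
  norm_num [z5, z6, z7, hζ] at j24 j64 j14 j34 j54 j74 j04 j44 j02 j12 j22 j32 j42 j52 j62 j72
  have hi : (ζ ^ 2) ^ 2 = -1 := by rw [← pow_mul]; exact hζ
  have hd : (e 1 + e 5) + (e 3 + e 7) = 0 := by
    have : (((e 1 + e 5) + (e 3 + e 7) : ℤ) : ℂ) = 0 := by
      push_cast; linear_combination (j04 - j44) / 2
    exact_mod_cast this
  refine ⟨hd, ?_, ?_⟩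
  · refine ⟨e 0 + e 4 - e 2 - e 6, ?_⟩
    have : ((Fintype.card F : ℤ) : ℂ) =
        (((e 0 + e 4 - e 2 - e 6) ^ 2 + 4 * (e 1 + e 5) ^ 2 : ℤ) : ℂ) := by
      have hd' : (e 3 : ℂ) = - (e 1 + e 5) - e 7 := by
        have : e 3 = - (e 1 + e 5) - e 7 := by linarith
        rw [this]; push_cast; ring
      rw [hd'] at j24 j64
      push_cast
      rw [← hKK, ← j24, ← j64]
      linear_combination (-4 * ((e 1 : ℂ) + e 5) ^ 2) * hi
    exact_mod_cast this
  · -- the integer A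
    obtain ⟨A, hA⟩ : ∃ A, A = e 0 - e 4 := ⟨_, rfl⟩
    obtain ⟨B', hB'⟩ : ∃ B', B' = e 1 - e 5 + (e 3 - e 7) := ⟨_, rfl⟩
    have hAc : (A : ℂ) = e 0 - e 4 := by rw [hA]; push_cast; ring
    have hBc : (B' : ℂ) = e 1 - e 5 + (e 3 - e 7) := by rw [hB']; push_cast; ring
    have hL : 2 * L = 2 * A + B' * (ζ + ζ ^ 3) := by
      rw [hAc, hBc]; linear_combination -j14 - j34
    have hL' : 2 * L' = 2 * A - B' * (ζ + ζ ^ 3) := by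
      rw [hAc, hBc]; linear_combination -j54 - j74
    have hq4 : 2 * (Fintype.card F : ℤ) = 2 * A ^ 2 + B' ^ 2 := by
      have : ((2 * (Fintype.card F : ℤ) : ℤ) : ℂ) = ((2 * A ^ 2 + B' ^ 2 : ℤ) : ℂ) := by
        push_cast
        have h1 : (2 * L) * (2 * L') = 4 * A ^ 2 + 2 * B' ^ 2 := by
          rw [hL, hL']; linear_combination (-(B' : ℂ) ^ 2 * (2 + ζ ^ 2)) * hζ
        linear_combination h1 / 2 - 2 * hLL
      exact_mod_cast this
    obtain ⟨B, hB⟩ : ∃ B, B' = 2 * B := by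
      have h1 : Even (B' ^ 2) := ⟨Fintype.card F - A ^ 2, by linarith⟩
      have h2 := (Int.even_pow.1 h1).1
      obtain ⟨B, hB⟩ := h2
      exact ⟨B, by rw [hB]; ring⟩
    have hqAB : (Fintype.card F : ℤ) = A ^ 2 + 2 * B ^ 2 := by
      rw [hB] at hq4; nlinarith
    have hAn : ¬ (p : ℤ) ∣ A := by
      have := A_ne hα h0 hf0 hf hF hp hq h8
      rw [hA, he]; exact this
    have hp3 : 3 < p := by have := hp.two_le; omega
    have hA3 := repr_unique hp hp3 (by rw [hq]; push_cast; rfl) hqAB hb hAn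
    -- sign
    have hE0 : 4 * E 0 = -(1 + A) := by
      have : L + L' = 2 * A := by linear_combination (hL + hL') / 2
      linear_combination (j02 + j12 + j22 + j32 + j42 + j52 + j62 + j72) / 2 - this / 2
    obtain ⟨u1, u2, hu⟩ : ∃ a b : ℤ, E 0 = a + b * ζ ^ 2 := by
      rw [hE]
      apply gauss_int_sum hi
      intro x
      by_cases hx : 1 - x = 0
      · left; rw [hx]; exact MulChar.map_nonunit _ (by simp)
      · right
        obtain ⟨n, hn⟩ := hα _ hx
        exact ⟨n, by rw [← hn, theta_pow_apply hθ _ _ h0, pow_mul]⟩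
    have hu1 : 4 * u1 + (1 + A) = 0 := by
      have := int_gauss hi (a := 4 * u1 + (1 + A)) (b := 4 * u2) (by
        push_cast; linear_combination hE0 - 4 * hu)
      exact this.1
    have hA3' : A = 3 := by omega
    have hLs : L + L' = 6 := by
      rw [hA3'] at hL hL'; push_cast at hL hL'; linear_combination (hL + hL') / 2
    have t1 : 2 * (E 1 + E 5 + E 3 + E 7) = -1 - K := by linear_combination j02 - j42
    have t2 : 2 * ζ ^ 2 * (E 1 + E 5 - E 3 - E 7) = K + 1 := by linear_combination j22 - j62
    have t3 : 8 * E 4 = 4 * K + 4 := by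
      linear_combination j02 - j12 + j22 - j32 + j42 - j52 + j62 - j72 + hLs
    linear_combination (1 + ζ ^ 2) / 4 * t1 - (1 - ζ ^ 2) * ζ ^ 2 / 4 * t2 + (1 + ζ ^ 2) / 8 * t3
      + ((1 - ζ ^ 2) / 2 * (E 1 + E 5 - E 3 - E 7) + (K + 1) / 4) * hi
end Key
section Counting
set_option linter.unusedSectionVars false
variable {F : Type*} [Field F] [Fintype F] [DecidableEq F]

theorem extDiff_map_sum (D E : Finset F) (φ : F → ℂ) :
    ((extDiff D E).map φ).sum = ∑ x ∈ D, ∑ y ∈ E, φ (x - y) := by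
  unfold extDiff
  rw [Multiset.map_map, ← Finset.sum_product']
  rfl

theorem extDiff_map_mul (D E : Finset F) {c : F} (hc : c ≠ 0) :
    (extDiff D E).map (fun x => c * x)
      = extDiff (D.image (fun x => c * x)) (E.image (fun x => c * x)) := by
  have hi : Function.Injective (fun x : F => c * x) := fun x y h => mul_left_cancel₀ hc h
  have h : (D.image (fun x => c * x)) ×ˢ (E.image (fun x => c * x))
      = (D ×ˢ E).image (Prod.map (fun x => c * x) (fun x => c * x)) := by
    rw [Finset.prodMap_image_product]
  unfold extDiff
  rw [h, Finset.image_val_of_injOn (hi.prodMap hi).injOn, Multiset.map_map, Multiset.map_map]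
  apply Multiset.map_congr rfl
  intro x _
  simp [mul_sub]

theorem extDiff_count_zero {D E : Finset F} (h : Disjoint D E) : (extDiff D E).count 0 = 0 := by
  rw [Multiset.count_eq_zero]
  unfold extDiff
  intro hm
  rw [Multiset.mem_map] at hm
  obtain ⟨x, hx, hx0⟩ := hm
  rw [Finset.mem_val, Finset.mem_product] at hx
  rw [sub_eq_zero] at hx0
  exact Finset.disjoint_left.1 h hx.1 (hx0 ▸ hx.2)

theorem extDiff_card (D E : Finset F) : (extDiff D E).card = D.card * E.card := by
  unfold extDiff
  rw [Multiset.card_map]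
  exact Finset.card_product D E

/-- the twelve external differences -/
def allDiff (α : F) : Multiset F :=
  (extDiff (cycClass α 8 0) (cycClass α 8 1) + extDiff (cycClass α 8 0) (cycClass α 8 4)
    + extDiff (cycClass α 8 0) (cycClass α 8 5)) +
  (extDiff (cycClass α 8 1) (cycClass α 8 0) + extDiff (cycClass α 8 1) (cycClass α 8 4)
    + extDiff (cycClass α 8 1) (cycClass α 8 5)) +
  (extDiff (cycClass α 8 4) (cycClass α 8 0) + extDiff (cycClass α 8 4) (cycClass α 8 1)
    + extDiff (cycClass α 8 4) (cycClass α 8 5)) +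
  (extDiff (cycClass α 8 5) (cycClass α 8 0) + extDiff (cycClass α 8 5) (cycClass α 8 1)
    + extDiff (cycClass α 8 5) (cycClass α 8 4))

theorem sum_eq_allDiff (α : F) :
    (∑ i, ∑ j ∈ Finset.univ.erase i,
            extDiff (![cycClass α 8 0, cycClass α 8 1, cycClass α 8 4,
              cycClass α 8 5] i)
              (![cycClass α 8 0, cycClass α 8 1, cycClass α 8 4, cycClass α 8 5] j))
      = allDiff α := by
  rw [Fin.sum_univ_four]
  rw [show (Finset.univ.erase (0 : Fin 4)) = {1, 2, 3} by decide,
    show (Finset.univ.erase (1 : Fin 4)) = {0, 2, 3} by decide,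
    show (Finset.univ.erase (2 : Fin 4)) = {0, 1, 3} by decide,
    show (Finset.univ.erase (3 : Fin 4)) = {0, 1, 2} by decide]
  have key : ∀ (a b c : Fin 4) (g : Fin 4 → Multiset F), a ≠ b → a ≠ c → b ≠ c →
      ∑ j ∈ ({a, b, c} : Finset (Fin 4)), g j = g a + g b + g c := by
    intro a b c g hab hac hbc
    rw [Finset.sum_insert (by simp [hab, hac]), Finset.sum_pair hbc, add_assoc]
  rw [key _ _ _ _ (by decide) (by decide) (by decide),
    key _ _ _ _ (by decide) (by decide) (by decide),
    key _ _ _ _ (by decide) (by decide) (by decide),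
    key _ _ _ _ (by decide) (by decide) (by decide)]
  rfl

theorem sum_ext_cyc {α : F} (hα : IsPrimitiveElt α) (h0 : α ≠ 0) {f : ℕ}
    (hf : Fintype.card F - 1 = 16 * f) {ζ : ℂ} {θ : MulChar F ℂ} (hζ : ζ ^ 4 = -1) (hθ : θ α = ζ)
    (v i j k : ℕ) (hi : i < 8) (hj : j < 8) (hk : k < 8) (hijk : (i + k) % 8 = j)
    (E : ℕ → ℂ) (hE : E = fun k => ∑ x ∈ cycClass α 8 k, (θ ^ v) (1 - x)) :
    ((extDiff (cycClass α 8 i) (cycClass α 8 j)).map (fun x => (θ ^ v) x)).sum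
      = 2 * f * (ζ ^ (v * i) * E k) := by
  have he : 8 ∣ Fintype.card F - 1 := by omega
  rw [extDiff_map_sum]
  have h1 : ∀ x ∈ cycClass α 8 i, ∑ y ∈ cycClass α 8 j, (θ ^ v) (x - y) = ζ ^ (v * i) * E k := by
    intro x hx
    have hx1 := theta_cyc hα h0 he hζ hθ v i hi hx
    obtain ⟨n, rfl, hn⟩ := (mem_cyc hα h0 hi he x).1 hx
    rw [sum_mul_cyc hα h0 he n hk hj (by omega), hE, ← hx1, Finset.mul_sum]
    apply Finset.sum_congr rfl
    intro y _
    rw [← map_mul, mul_sub, mul_one]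
  rw [Finset.sum_congr rfl h1, Finset.sum_const, card_cyc hα h0 hi he, hf,
    show 16 * f / 8 = 2 * f by omega, nsmul_eq_mul]
  push_cast
  ring

theorem allDiff_sum {α : F} (hα : IsPrimitiveElt α) (h0 : α ≠ 0) {f : ℕ}
    (hf : Fintype.card F - 1 = 16 * f) {ζ : ℂ} {θ : MulChar F ℂ} (hζ : ζ ^ 4 = -1) (hθ : θ α = ζ)
    (v : ℕ) (hv : Even v)
    (E : ℕ → ℂ) (hE : E = fun k => ∑ x ∈ cycClass α 8 k, (θ ^ v) (1 - x)) :
    ((allDiff α).map (fun x => (θ ^ v) x)).sum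
      = 4 * f * ((E 1 + E 5 + E 4) + ζ ^ v * (E 3 + E 7 + E 4)) := by
  have S := fun i j k hi hj hk h => sum_ext_cyc hα h0 hf hζ hθ v i j k hi hj hk h E hE
  obtain ⟨w, rfl⟩ := hv
  have h4 : ζ ^ ((w + w) * 4) = 1 := by
    rw [show (w + w) * 4 = 8 * w by ring, pow_mul, zeta8 hζ, one_pow]
  have h5 : ζ ^ ((w + w) * 5) = ζ ^ (w + w) := by
    rw [show (w + w) * 5 = (w + w) * 4 + (w + w) by ring, pow_add, h4, one_mul]
  unfold allDiff
  simp only [Multiset.map_add, Multiset.sum_add]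
  rw [S 0 1 1 (by norm_num) (by norm_num) (by norm_num) (by norm_num),
    S 0 4 4 (by norm_num) (by norm_num) (by norm_num) (by norm_num),
    S 0 5 5 (by norm_num) (by norm_num) (by norm_num) (by norm_num),
    S 1 0 7 (by norm_num) (by norm_num) (by norm_num) (by norm_num),
    S 1 4 3 (by norm_num) (by norm_num) (by norm_num) (by norm_num),
    S 1 5 4 (by norm_num) (by norm_num) (by norm_num) (by norm_num),
    S 4 0 4 (by norm_num) (by norm_num) (by norm_num) (by norm_num),
    S 4 1 5 (by norm_num) (by norm_num) (by norm_num) (by norm_num),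
    S 4 5 1 (by norm_num) (by norm_num) (by norm_num) (by norm_num),
    S 5 0 3 (by norm_num) (by norm_num) (by norm_num) (by norm_num),
    S 5 1 4 (by norm_num) (by norm_num) (by norm_num) (by norm_num),
    S 5 4 7 (by norm_num) (by norm_num) (by norm_num) (by norm_num), h4, h5,
    mul_one, mul_zero, pow_zero]
  ring

theorem allDiff_card {α : F} (hα : IsPrimitiveElt α) (h0 : α ≠ 0) {f : ℕ}
    (hf : Fintype.card F - 1 = 16 * f) : (allDiff α).card = 48 * f ^ 2 := by
  have he : 8 ∣ Fintype.card F - 1 := by omega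
  have hc : ∀ k, k < 8 → (cycClass α 8 k).card = 2 * f := by
    intro k hk
    rw [card_cyc hα h0 hk he, hf]; omega
  unfold allDiff
  simp only [Multiset.card_add, extDiff_card]
  rw [hc 0 (by norm_num), hc 1 (by norm_num), hc 4 (by norm_num), hc 5 (by norm_num)]
  ring

theorem allDiff_count_zero {α : F} (hα : IsPrimitiveElt α) (h0 : α ≠ 0)
    (he : 8 ∣ Fintype.card F - 1) : (allDiff α).count 0 = 0 := by
  have hd := fun (k l : ℕ) (hk : k < 8) (hl : l < 8) (hkl : k ≠ l) =>
    extDiff_count_zero (cyc_disjoint hα h0 hk hl hkl he)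
  unfold allDiff
  simp only [Multiset.count_add]
  simp [hd]

theorem allDiff_mul {α : F} (hα : IsPrimitiveElt α) (h0 : α ≠ 0)
    (he : 8 ∣ Fintype.card F - 1) : (allDiff α).map (fun x => α ^ 4 * x) = allDiff α := by
  unfold allDiff
  simp only [Multiset.map_add, extDiff_map_mul _ _ (pow_ne_zero 4 h0)]
  rw [image_mul_cyc hα h0 he 4 (k := 0) (l := 4) (by norm_num) (by norm_num) (by norm_num),
    image_mul_cyc hα h0 he 4 (k := 1) (l := 5) (by norm_num) (by norm_num) (by norm_num),
    image_mul_cyc hα h0 he 4 (k := 4) (l := 0) (by norm_num) (by norm_num) (by norm_num),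
    image_mul_cyc hα h0 he 4 (k := 5) (l := 1) (by norm_num) (by norm_num) (by norm_num)]
  abel

theorem allDiff_count {α : F} (hα : IsPrimitiveElt α) (h0 : α ≠ 0)
    (he : 8 ∣ Fintype.card F - 1) (n : ℕ) :
    (allDiff α).count (α ^ n) = (allDiff α).count (α ^ (n % 4)) := by
  have hi : Function.Injective (fun x : F => α ^ 4 * x) :=
    fun x y h => mul_left_cancel₀ (pow_ne_zero 4 h0) h
  have h1 : ∀ x, (allDiff α).count (α ^ 4 * x) = (allDiff α).count x := by
    intro x
    have := Multiset.count_map_eq_count' (fun x => α ^ 4 * x) (allDiff α) hi x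
    rwa [allDiff_mul hα h0 he] at this
  have h2 : ∀ t k, (allDiff α).count (α ^ (4 * t + k)) = (allDiff α).count (α ^ k) := by
    intro t k
    induction t with
    | zero => simp
    | succ t ih =>
      rw [show 4 * (t + 1) + k = 4 + (4 * t + k) by ring, pow_add, h1, ih]
  have := h2 (n / 4) (n % 4)
  rwa [Nat.div_add_mod] at this

theorem map_sum_count (M : Multiset F) (φ : F → ℂ) :
    (M.map φ).sum = ∑ x, (M.count x : ℂ) * φ x := by
  rw [Finset.sum_multiset_map_count]
  rw [Finset.sum_subset (Finset.subset_univ _)]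
  · simp
  · intro x _ hx
    rw [Multiset.mem_toFinset, ← Multiset.count_eq_zero] at hx
    rw [hx, zero_smul]

theorem allDiff_sum_count {α : F} (hα : IsPrimitiveElt α) (h0 : α ≠ 0) {f : ℕ}
    (hf : Fintype.card F - 1 = 16 * f) (φ : F → ℂ) (z : ℂ) (hz : z ^ 4 = 1)
    (hφ : ∀ n, φ (α ^ n) = z ^ n) (N : ℕ → ℕ) (hN : N = fun k => (allDiff α).count (α ^ k)) :
    ((allDiff α).map φ).sum = 4 * f * (N 0 + N 1 * z + N 2 * z ^ 2 + N 3 * z ^ 3) := by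
  have he : 8 ∣ Fintype.card F - 1 := by omega
  have he4 : 4 ∣ Fintype.card F - 1 := by omega
  rw [map_sum_count, sum_cyc hα h0 (by norm_num : 0 < 4) he4, allDiff_count_zero hα h0 he]
  have h1 : ∀ k ∈ Finset.range 4, ∑ x ∈ cycClass α 4 k, ((allDiff α).count x : ℂ) * φ x
      = 4 * f * (N k * z ^ k) := by
    intro k hk
    rw [Finset.mem_range] at hk
    have h2 : ∀ x ∈ cycClass α 4 k, ((allDiff α).count x : ℂ) * φ x = N k * z ^ k := by
      intro x hx
      obtain ⟨n, rfl, hn⟩ := (mem_cyc hα h0 hk he4 x).1 hx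
      rw [allDiff_count hα h0 he, hφ, hn, hN]
      congr 1
      rw [← Nat.div_add_mod n 4, hn, pow_add, pow_mul, hz, one_pow, one_mul]
    rw [Finset.sum_congr rfl h2, Finset.sum_const, card_cyc hα h0 hk he4, hf,
      show 16 * f / 4 = 4 * f by omega, nsmul_eq_mul]
    push_cast
    ring
  rw [Finset.sum_congr rfl h1]
  simp only [Finset.sum_range_succ, Finset.sum_range_zero]
  push_cast
  ring

theorem allDiff_final {α : F} (hα : IsPrimitiveElt α) (h0 : α ≠ 0) {f : ℕ} (hf0 : f ≠ 0)
    (hf : Fintype.card F - 1 = 16 * f) (hF : ringChar F ≠ 2)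
    {ζ : ℂ} {θ : MulChar F ℂ} (hζ : ζ ^ 4 = -1) (hθ : θ α = ζ) (h4 : θ 4 = -1)
    {p m : ℕ} (hp : p.Prime) [CharP F p] (hq : Fintype.card F = p ^ m) (h8 : p % 8 = 1)
    (b : ℤ) (hb : (Fintype.card F : ℤ) = (-3) ^ 2 + 2 * b ^ 2) :
    ∃ (X y : ℤ) (lam mu : ℕ), (Fintype.card F : ℤ) = X ^ 2 + 4 * y ^ 2 ∧
      (lam : ℤ) + mu = 6 * f ∧ (lam : ℤ) - mu = y ∧
      (∀ n, (allDiff α).count (α ^ n) = if n % 2 = 0 then lam else mu) := by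
  have he : 8 ∣ Fintype.card F - 1 := by omega
  have hfC : (4 * f : ℂ) ≠ 0 := by
    exact mul_ne_zero (by norm_num) (by exact_mod_cast hf0)
  set e : ℕ → ℤ := fun k => ∑ x ∈ cycClass α 8 k, quadraticChar F (1 - x) with hee
  set E : ℕ → ℂ := fun k => ∑ x ∈ cycClass α 8 k, (θ ^ 2) (1 - x) with hEE
  obtain ⟨k1, ⟨X, k2⟩, k3⟩ := key_sums hα h0 hf0 hf hF hζ hθ h4 hp hq h8 b hb e hee E hEE
  set N : ℕ → ℕ := fun k => (allDiff α).count (α ^ k) with hN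
  have E4 : (fun k => (e k : ℂ)) = fun k => ∑ x ∈ cycClass α 8 k, (θ ^ 4) (1 - x) := by
    funext k
    rw [hee]
    push_cast
    apply Finset.sum_congr rfl
    intro x _
    rw [quad_eq_apply hα h0 (f := 8 * f) (by omega) (by omega) hζ hθ]
  have hap : ∀ v n, (θ ^ v) (α ^ n) = (ζ ^ v) ^ n := by
    intro v n
    rw [theta_pow_apply hθ v n h0, pow_mul]
  have hz2 : (ζ ^ 2) ^ 2 = -1 := by rw [← pow_mul]; exact hζ
  -- trivial character
  have t0 := allDiff_sum_count hα h0 hf (fun _ => 1) 1 (by norm_num) (by simp) N hN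
  have t2 := allDiff_sum_count hα h0 hf (fun x => (θ ^ 2) x) (ζ ^ 2)
    (by rw [← pow_mul]; exact zeta8 hζ) (hap 2) N hN
  have t4 := allDiff_sum_count hα h0 hf (fun x => (θ ^ 4) x) (ζ ^ 4)
    (by rw [hζ]; norm_num) (hap 4) N hN
  rw [allDiff_sum hα h0 hf hζ hθ 2 (by decide) E hEE] at t2
  rw [allDiff_sum hα h0 hf hζ hθ 4 (by decide) _ E4] at t4
  rw [k3] at t2
  rw [hζ] at t4
  have t2' := mul_left_cancel₀ hfC t2
  have t4' := mul_left_cancel₀ hfC t4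
  simp only [Multiset.map_const', Multiset.sum_replicate, nsmul_eq_mul, mul_one, one_pow] at t0
  rw [allDiff_card hα h0 hf] at t0
  have t0' : (12 * f : ℂ) = N 0 + N 1 + N 2 + N 3 := by
    apply mul_left_cancel₀ hfC
    rw [← t0]
    push_cast; ring
  have n0 : (12 * f : ℤ) = N 0 + N 1 + N 2 + N 3 := by exact_mod_cast t0'
  have n4 : (e 1 + e 5 + e 4) - (e 3 + e 7 + e 4) = (N 0 - N 1 + N 2 - N 3 : ℤ) := by
    have : (((e 1 + e 5 + e 4) - (e 3 + e 7 + e 4) : ℤ) : ℂ) = ((N 0 - N 1 + N 2 - N 3 : ℤ) : ℂ) := by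
      push_cast
      linear_combination t4'
    exact_mod_cast this
  have n2 := int_gauss (i := ζ ^ 2) (a := (N 0 : ℤ) - N 2) (b := (N 1 : ℤ) - N 3) hz2 (by
    push_cast
    linear_combination -t2' - ((N 2 : ℂ) + N 3 * ζ ^ 2) * hz2)
  have a1 : N 0 = N 2 := by omega
  have a2 : N 1 = N 3 := by omega
  refine ⟨X, e 1 + e 5, N 0, N 1, k2, by omega, by omega, ?_⟩
  intro n
  rw [allDiff_count hα h0 he]
  change N (n % 4) = _
  have h4 : n % 4 = 0 ∨ n % 4 = 1 ∨ n % 4 = 2 ∨ n % 4 = 3 := by omega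
  rcases h4 with h | h | h | h
  · rw [h, if_pos (by omega)]
  · rw [h, if_neg (by omega)]
  · rw [h, if_pos (by omega), a1]
  · rw [h, if_neg (by omega), a2]

end Counting
/-- Let `q = p^m ≡ 1 (mod 16)` be a prime power in which `2` is not a
quartic residue, and let `a` be the integer with `q = a² + 2b²`, `a ≡ 1 (mod 4)`, with
`a = -3`.  Then there are integers `x ≡ 1 (mod 4)` and `y` with `q = x² + 4y²` such
that `D = {C_0^8, C_1^8, C_4^8, C_5^8}` satisfies
`∑_{i≠j} Δ(D_i,D_j) = ((3q-3+8y)/16) • C_0^2 + ((3q-3-8y)/16) • C_1^2`; in particular,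
`D` is a `(q,4,(q-1)/8;(3q-3+8y)/16,(3q-3-8y)/16)`-EPDF relative to `C_0^2` if `y ≠ 0`,
and a `(q,4,(q-1)/8,(3q-3)/16)`-EDF if `y = 0`. -/
theorem stmt_17 {F : Type*} [Field F] [Fintype F] [DecidableEq F]
    (q p m : ℕ) (hp : p.Prime) (hq : Fintype.card F = q) (hqpm : q = p ^ m)
    (hq16 : q % 16 = 1)
    (α : F) (hα : IsPrimitiveElt α)
    (h2 : (2 : F) ∉ cycClass α 4 0)
    (a b : ℤ) (hab : (q : ℤ) = a ^ 2 + 2 * b ^ 2) (ha4 : a % 4 = 1) (ha : a = -3) :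
    ∃ x y : ℤ, x % 4 = 1 ∧ (q : ℤ) = x ^ 2 + 4 * y ^ 2 ∧
      ∃ lam mu : ℕ,
        16 * (lam : ℤ) = 3 * (q : ℤ) - 3 + 8 * y ∧
        16 * (mu : ℤ) = 3 * (q : ℤ) - 3 - 8 * y ∧
        (∑ i, ∑ j ∈ Finset.univ.erase i,
            extDiff (![cycClass α 8 0, cycClass α 8 1, cycClass α 8 4,
              cycClass α 8 5] i)
              (![cycClass α 8 0, cycClass α 8 1, cycClass α 8 4, cycClass α 8 5] j)) =
          lam • (cycClass α 2 0).val + mu • (cycClass α 2 1).val ∧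
        (y ≠ 0 →
          IsEPDF ![cycClass α 8 0, cycClass α 8 1, cycClass α 8 4, cycClass α 8 5]
            q 4 (fun _ => (q - 1) / 8) (cycClass α 2 0) lam mu) ∧
        (y = 0 →
          IsEDF ![cycClass α 8 0, cycClass α 8 1, cycClass α 8 4, cycClass α 8 5]
            q 4 (fun _ => (q - 1) / 8) lam) := by
  subst hq
  subst ha
  have hc1 := Fintype.one_lt_card (α := F)
  obtain ⟨f, hf⟩ : ∃ f, Fintype.card F - 1 = 16 * f :=
    ⟨(Fintype.card F - 1) / 16, by omega⟩
  have hf0 : f ≠ 0 := by omega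
  have h0 := prim_ne_zero hα (by omega)
  have he8 : 8 ∣ Fintype.card F - 1 := by omega
  have he2 : 2 ∣ Fintype.card F - 1 := by omega
  have : Fact p.Prime := ⟨hp⟩
  have : CharP F p := charP_of_card_eq_prime_pow hqpm
  have hF : ringChar F ≠ 2 := by
    intro h
    have := FiniteField.even_card_of_char_two h
    omega
  have h2F : (2 : F) ≠ 0 := Ring.two_ne_zero hF
  obtain ⟨ζ, θ, hζ, hθ⟩ := exists_theta hα h0 he8
  have h8 := p_mod_eight hα h0 hp hqpm hq16 h2
  have h4 := theta_four hα h0 hq16 h2 hζ hθ h2F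
  obtain ⟨X, y, lam, mu, hX, hs, hd, hcount⟩ :=
    allDiff_final hα h0 hf0 hf hF hζ hθ h4 hp hqpm h8 b hab
  have hX2 : X % 2 = 1 := by
    rcases Int.emod_two_eq_zero_or_one X with h | h
    · exfalso
      obtain ⟨c, rfl⟩ : ∃ c, X = 2 * c := ⟨X / 2, by omega⟩
      have : (Fintype.card F : ℤ) = 2 * (2 * c ^ 2 + 2 * y ^ 2) := by rw [hX]; ring
      omega
    · exact h
  obtain ⟨x, hx4, hx⟩ : ∃ x : ℤ, x % 4 = 1 ∧ x ^ 2 = X ^ 2 := by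
    by_cases h : X % 4 = 1
    · exact ⟨X, h, rfl⟩
    · exact ⟨-X, by omega, by ring⟩
  have hmem : ∀ (k n : ℕ), k < 2 → (α ^ n ∈ cycClass α 2 k ↔ n % 2 = k) :=
    fun k n hk => pow_mem_cyc hα h0 hk he2 n
  have hcomp : Gstar F \ cycClass α 2 0 = cycClass α 2 1 := by
    ext z
    unfold Gstar
    rw [Finset.mem_sdiff, Finset.mem_erase]
    constructor
    · rintro ⟨⟨hz, _⟩, hz2⟩
      obtain ⟨n, rfl⟩ := hα z hz
      rw [hmem 0 n (by norm_num)] at hz2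
      rw [hmem 1 n (by norm_num)]
      omega
    · intro hz
      have hz0 := cyc_ne_zero h0 hz
      obtain ⟨n, rfl⟩ := hα z hz0
      rw [hmem 1 n (by norm_num)] at hz
      rw [hmem 0 n (by norm_num)]
      exact ⟨⟨hz0, Finset.mem_univ _⟩, by omega⟩
  have hM : allDiff α = lam • (cycClass α 2 0).val + mu • (cycClass α 2 1).val := by
    ext z
    rw [Multiset.count_add, Multiset.count_nsmul, Multiset.count_nsmul,
      Multiset.count_eq_of_nodup (cycClass α 2 0).nodup,
      Multiset.count_eq_of_nodup (cycClass α 2 1).nodup]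
    simp only [Finset.mem_val]
    by_cases hz : z = 0
    · subst hz
      rw [allDiff_count_zero hα h0 he8, if_neg (fun h => cyc_ne_zero h0 h rfl),
        if_neg (fun h => cyc_ne_zero h0 h rfl)]
      simp
    · obtain ⟨n, rfl⟩ := hα z hz
      rw [hcount n]
      simp only [hmem 0 n (by norm_num), hmem 1 n (by norm_num)]
      rcases Nat.mod_two_eq_zero_or_one n with h | h <;> simp [h]
  have hcard : ∀ i : Fin 4, (![cycClass α 8 0, cycClass α 8 1, cycClass α 8 4,
      cycClass α 8 5] i).card = (Fintype.card F - 1) / 8 := by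
    intro i
    fin_cases i
    · exact card_cyc hα h0 (by norm_num) he8
    · exact card_cyc hα h0 (by norm_num) he8
    · exact card_cyc hα h0 (by norm_num) he8
    · exact card_cyc hα h0 (by norm_num) he8
  have hzero : ∀ i : Fin 4, (0 : F) ∉ ![cycClass α 8 0, cycClass α 8 1, cycClass α 8 4,
      cycClass α 8 5] i := by
    intro i
    fin_cases i
    · exact fun h => cyc_ne_zero h0 h rfl
    · exact fun h => cyc_ne_zero h0 h rfl
    · exact fun h => cyc_ne_zero h0 h rfl
    · exact fun h => cyc_ne_zero h0 h rfl
  have hdisj : Pairwise (fun i j : Fin 4 =>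
      Disjoint (![cycClass α 8 0, cycClass α 8 1, cycClass α 8 4, cycClass α 8 5] i)
        (![cycClass α 8 0, cycClass α 8 1, cycClass α 8 4, cycClass α 8 5] j)) := by
    have hfun : ∀ i : Fin 4, ![cycClass α 8 0, cycClass α 8 1, cycClass α 8 4,
        cycClass α 8 5] i = cycClass α 8 (![0, 1, 4, 5] i) := by
      intro i
      fin_cases i <;> rfl
    intro i j hij
    rw [hfun i, hfun j]
    have hlt : ∀ i : Fin 4, ![0, 1, 4, 5] i < 8 := by decide
    have hne : ∀ i j : Fin 4, i ≠ j → ![0, 1, 4, 5] i ≠ ![0, 1, 4, 5] j := by decide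
    exact cyc_disjoint hα h0 (hlt i) (hlt j) (hne i j hij) he8
  refine ⟨x, y, hx4, by rw [hX, hx], lam, mu, by omega, by omega, ?_, ?_, ?_⟩
  · rw [sum_eq_allDiff, hM]
  · intro _
    refine ⟨rfl, by simp, hzero, hcard, hdisj, ?_⟩
    rw [sum_eq_allDiff, hM, hcomp]
  · intro hy
    refine ⟨rfl, by simp, hzero, hcard, hdisj, ?_⟩
    have hlm : mu = lam := by omega
    rw [sum_eq_allDiff, hM, hlm, ← smul_add]
    congr 1
    ext z
    rw [Multiset.count_add,
      Multiset.count_eq_of_nodup (cycClass α 2 0).nodup,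
      Multiset.count_eq_of_nodup (cycClass α 2 1).nodup,
      Multiset.count_eq_of_nodup (Gstar F).nodup]
    simp only [Finset.mem_val]
    by_cases hz : z = 0
    · subst hz
      rw [if_neg (fun h => cyc_ne_zero h0 h rfl),
        if_neg (fun h => cyc_ne_zero h0 h rfl), if_neg (by simp [Gstar])]
    · have hg : z ∈ Gstar F := by simp [Gstar, hz]
      rw [if_pos hg]
      obtain ⟨n, rfl⟩ := hα z hz
      simp only [hmem 0 n (by norm_num), hmem 1 n (by norm_num)]
      rcases Nat.mod_two_eq_zero_or_one n with h | h <;> simp [h]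
end
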